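/- arXiv:2502.16445 — 2 statements merged into one kernel-verified Lean document; each statement's English description precedes it below -/
import Mathlib

section
/- Let γ_d denote the standard Gaussian measure on ℝ^d and let ν be a probability measure on ℝ^d with D_KL(ν‖γ_d) < ∞. Then the infimum, over all couplings π of γ_d and ν, of the quadratic transport cost ∫ ‖x − y‖² dπ(x,y) is at most 2·D_KL(ν‖γ_d); equivalently, W₂(γ_d, ν)² ≤ 2·D_KL(ν‖γ_d). (Talagrand transportation-cost inequality, Theorem 4.3 of the paper with π₀ the standard Gaussian.) -/
open MeasureTheory ENNReal
open scoped Classical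

noncomputable section

/-- A coupling of `μ` and `ν`: a probability measure on the product whose
first marginal is `μ` and whose second marginal is `ν`. -/
def IsCoupling {d : ℕ}
    (π : Measure (EuclideanSpace ℝ (Fin d) × EuclideanSpace ℝ (Fin d)))
    (μ ν : Measure (EuclideanSpace ℝ (Fin d))) : Prop :=
  IsProbabilityMeasure π ∧ π.map Prod.fst = μ ∧ π.map Prod.snd = ν

/-- The quadratic transport cost `∫ ‖x − y‖² dπ(x,y)` of a plan `π`. -/
def transportCost {d : ℕ}
    (π : Measure (EuclideanSpace ℝ (Fin d) × EuclideanSpace ℝ (Fin d))) : ℝ≥0∞ :=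
  ∫⁻ p, ENNReal.ofReal (‖p.1 - p.2‖ ^ 2) ∂π

/-- The squared Wasserstein-2 distance: the infimum of the quadratic transport cost
over all couplings of `μ` and `ν`. -/
def W2sq {d : ℕ} (μ ν : Measure (EuclideanSpace ℝ (Fin d))) : ℝ≥0∞ :=
  sInf {c : ℝ≥0∞ | ∃ π, IsCoupling π μ ν ∧ c = transportCost π}

/-- The Kullback–Leibler divergence `D_KL(ν‖μ) = ∫ log(dν/dμ) dν` when `ν ≪ μ`
(and this integral makes sense), and `+∞` otherwise. -/
def klDiv {α : Type*} [MeasurableSpace α] (ν μ : Measure α) : ℝ≥0∞ :=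
  if ν ≪ μ ∧ Integrable (llr ν μ) ν then ENNReal.ofReal (∫ x, llr ν μ x ∂ν) else ∞

/-- The standard Gaussian measure on `ℝ^d`, with density
`(2π)^(−d/2) exp(−‖x‖²/2)` with respect to Lebesgue measure. -/
def stdGaussian (d : ℕ) : Measure (EuclideanSpace ℝ (Fin d)) :=
  volume.withDensity fun x =>
    ENNReal.ofReal ((2 * Real.pi) ^ (-(d : ℝ) / 2) * Real.exp (-‖x‖ ^ 2 / 2))

section GaussianRearrangement

open ProbabilityTheory hiding stdGaussian
open Set Filter Topology

local notation "γ₁" => gaussianReal 0 1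

lemma continuous_cdf (ρ : Measure ℝ) [IsProbabilityMeasure ρ] [NullSingletonClass ρ] :
    Continuous (cdf ρ) := by
  refine continuous_iff_continuousAt.2 fun x ↦ ?_
  have h : (cdf ρ).measure {x} = 0 := by rw [measure_cdf]; simp
  rw [StieltjesFunction.measure_singleton, ENNReal.ofReal_eq_zero] at h
  rw [(monotone_cdf ρ).continuousAt_iff_leftLim_eq_rightLim, StieltjesFunction.rightLim_eq]
  exact le_antisymm ((monotone_cdf ρ).leftLim_le le_rfl) (by linarith)

instance : NullSingletonClass γ₁ := nullSingletonClass_gaussianReal one_ne_zero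

lemma strictMono_cdf_gaussian : StrictMono (cdf γ₁) := by
  intro a b hab
  have h : (0 : ℝ≥0∞) < γ₁ (Ioc a b) := by
    rw [pos_iff_ne_zero]
    intro h
    have := gaussianReal_absolutelyContinuous' 0 one_ne_zero h
    simp [Real.volume_Ioc] at this
    linarith
  rw [← measure_cdf γ₁, StieltjesFunction.measure_Ioc, ENNReal.ofReal_pos] at h
  linarith

lemma cdf_gaussian_mem_Ioo (x : ℝ) : cdf γ₁ x ∈ Ioo (0 : ℝ) 1 :=
  ⟨(cdf_nonneg γ₁ (x - 1)).trans_lt (strictMono_cdf_gaussian (by linarith)),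
    (strictMono_cdf_gaussian (show x < x + 1 by linarith)).trans_le (cdf_le_one γ₁ _)⟩

lemma exists_cdf_eq (ρ : Measure ℝ) [IsProbabilityMeasure ρ] [NullSingletonClass ρ]
    {u : ℝ} (hu : u ∈ Ioo (0 : ℝ) 1) : ∃ x, cdf ρ x = u :=
  mem_range_of_exists_le_of_exists_ge (continuous_cdf ρ)
    ((tendsto_cdf_atBot ρ).eventually_le_const hu.1).exists
    ((tendsto_cdf_atTop ρ).eventually_const_le hu.2).exists

/-- The quantile function of the standard Gaussian on `ℝ`, set to `0` outside `(0, 1)`. -/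
def gaussianQuantile : ℝ → ℝ := Function.extend (cdf γ₁) id 0

@[simp]
lemma gaussianQuantile_cdf (x : ℝ) : gaussianQuantile (cdf γ₁ x) = x :=
  strictMono_cdf_gaussian.injective.extend_apply _ _ _

lemma cdf_gaussianQuantile {u : ℝ} (hu : u ∈ Ioo (0 : ℝ) 1) :
    cdf γ₁ (gaussianQuantile u) = u := by
  obtain ⟨x, rfl⟩ := exists_cdf_eq γ₁ hu
  simp

@[fun_prop]
lemma measurable_gaussianQuantile : Measurable gaussianQuantile :=
  ((continuous_cdf γ₁).measurableEmbedding
    strictMono_cdf_gaussian.injective).measurable_extend measurable_id measurable_const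

/-- The increasing rearrangement of `ρ` onto the standard Gaussian of `ℝ`. -/
def toGaussian (ρ : Measure ℝ) (y : ℝ) : ℝ := gaussianQuantile (cdf ρ y)

@[fun_prop]
lemma measurable_toGaussian (ρ : Measure ℝ) : Measurable (toGaussian ρ) :=
  measurable_gaussianQuantile.comp (monotone_cdf ρ).measurable

lemma toGaussian_lt_iff (ρ : Measure ℝ) {y z : ℝ} (hy : cdf ρ y ∈ Ioo (0 : ℝ) 1) :
    z < toGaussian ρ y ↔ cdf γ₁ z < cdf ρ y := by
  rw [toGaussian, ← strictMono_cdf_gaussian.lt_iff_lt, cdf_gaussianQuantile hy]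

lemma hasDerivAt_gaussianPDFReal (x : ℝ) :
    HasDerivAt (gaussianPDFReal 0 1) (-(x * gaussianPDFReal 0 1 x)) x := by
  have h : HasDerivAt (fun x : ℝ ↦ -(x - 0) ^ 2 / (2 * ((1 : NNReal) : ℝ))) (-x) x := by
    have := (((hasDerivAt_id x).sub_const 0).pow 2).neg.div_const (2 * ((1 : NNReal) : ℝ))
    refine this.congr_deriv ?_
    simp only [id, sub_zero, Nat.cast_ofNat, NNReal.coe_one]
    ring
  refine (h.exp.const_mul (√(2 * Real.pi * (1 : NNReal)))⁻¹).congr_deriv ?_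
  simp only [gaussianPDFReal]
  ring

lemma integral_Ioi_id_gaussian (z : ℝ) : ∫ x in Ioi z, x ∂γ₁ = gaussianPDFReal 0 1 z := by
  have hint : Integrable (fun x : ℝ ↦ x * gaussianPDFReal 0 1 x) := by
    have h : Integrable (fun z : ℝ ↦ z) γ₁ := (memLp_id_gaussianReal 1).integrable le_rfl
    rw [gaussianReal_of_var_ne_zero _ one_ne_zero, integrable_withDensity_iff
      (measurable_gaussianPDF _ _) (ae_of_all _ fun _ ↦ gaussianPDF_lt_top)] at h
    simpa only [toReal_gaussianPDF] using h
  have hlim : Tendsto (gaussianPDFReal 0 1) atTop (𝓝 0) :=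
    tendsto_zero_of_hasDerivAt_of_integrableOn_Ioi (a := z)
      (fun x _ ↦ hasDerivAt_gaussianPDFReal x) hint.neg.integrableOn
      (integrable_gaussianPDFReal 0 1).integrableOn
  have h := integral_Ioi_of_hasDerivAt_of_tendsto' (a := z)
    (fun x _ ↦ hasDerivAt_gaussianPDFReal x) hint.neg.integrableOn hlim
  rw [integral_neg, zero_sub, neg_inj] at h
  rw [← h, gaussianReal_of_var_ne_zero _ one_ne_zero,
    setIntegral_withDensity_eq_setIntegral_toReal_smul (measurable_gaussianPDF _ _)
      (ae_of_all _ fun _ ↦ gaussianPDF_lt_top) _ measurableSet_Ioi]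
  simp only [toReal_gaussianPDF, smul_eq_mul, mul_comm]

section NoAtoms

variable (ρ : Measure ℝ) [IsProbabilityMeasure ρ] [NullSingletonClass ρ]

lemma measure_cdf_le {u : ℝ} (hu : u ∈ Ioo (0 : ℝ) 1) : ρ {y | cdf ρ y ≤ u} = ENNReal.ofReal u := by
  obtain ⟨x, hx⟩ := exists_cdf_eq ρ hu
  obtain ⟨b, hb⟩ := ((tendsto_cdf_atTop ρ).eventually_const_lt hu.2).exists
  have hbdd : BddAbove {y | cdf ρ y ≤ u} :=
    ⟨b, fun y hy ↦ ((monotone_cdf ρ).reflect_lt (lt_of_le_of_lt hy hb)).le⟩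
  have hmem : sSup {y | cdf ρ y ≤ u} ∈ {y | cdf ρ y ≤ u} :=
    (isClosed_le (continuous_cdf ρ) continuous_const).csSup_mem ⟨x, hx.le⟩ hbdd
  have hset : {y | cdf ρ y ≤ u} = Iic (sSup {y | cdf ρ y ≤ u}) :=
    Subset.antisymm (fun y hy ↦ le_csSup hbdd hy)
      fun y hy ↦ (monotone_cdf ρ hy).trans hmem
  rw [hset, ← ofReal_cdf]
  congr 1
  exact le_antisymm hmem (hx.ge.trans (monotone_cdf ρ (le_csSup hbdd hx.le)))

lemma ae_cdf_mem_Ioo : ∀ᵐ y ∂ρ, cdf ρ y ∈ Ioo (0 : ℝ) 1 := by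
  have h0 : ρ {y | cdf ρ y ≤ 0} = 0 := by
    refine le_antisymm (ENNReal.le_of_forall_pos_le_add fun ε hε _ ↦ ?_) zero_le
    have hε' : min (ε : ℝ) (1 / 2) ∈ Ioo (0 : ℝ) 1 :=
      ⟨by positivity, (min_le_right _ _).trans_lt (by norm_num)⟩
    calc ρ {y | cdf ρ y ≤ 0} ≤ ρ {y | cdf ρ y ≤ min (ε : ℝ) (1 / 2)} :=
          measure_mono fun y hy ↦ le_trans hy hε'.1.le
      _ = ENNReal.ofReal (min (ε : ℝ) (1 / 2)) := measure_cdf_le ρ hε'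
      _ ≤ ENNReal.ofReal ε := ENNReal.ofReal_le_ofReal (min_le_left _ _)
      _ = 0 + ε := by simp
  have h1 : ρ {y | cdf ρ y < 1}ᶜ = 0 := by
    rw [prob_compl_eq_zero_iff (measurableSet_lt (monotone_cdf ρ).measurable measurable_const)]
    refine le_antisymm prob_le_one (ENNReal.le_of_forall_pos_le_add fun ε hε _ ↦ ?_)
    have hε' : 1 - min (ε : ℝ) (1 / 2) ∈ Ioo (0 : ℝ) 1 :=
      ⟨by linarith [min_le_right (ε : ℝ) (1 / 2)], sub_lt_self _ (by positivity)⟩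
    calc (1 : ℝ≥0∞) = ENNReal.ofReal (1 - min (ε : ℝ) (1 / 2) + min (ε : ℝ) (1 / 2)) := by simp
      _ = ENNReal.ofReal (1 - min (ε : ℝ) (1 / 2)) + ENNReal.ofReal (min (ε : ℝ) (1 / 2)) :=
          ENNReal.ofReal_add hε'.1.le (by positivity)
      _ ≤ ρ {y | cdf ρ y < 1} + ENNReal.ofReal ε := by
          rw [← measure_cdf_le ρ hε']
          exact add_le_add (measure_mono fun y hy ↦ lt_of_le_of_lt hy hε'.2)
            (ENNReal.ofReal_le_ofReal (min_le_left _ _))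
      _ = _ := by simp
  filter_upwards [measure_eq_zero_iff_ae_notMem.1 h0, measure_eq_zero_iff_ae_notMem.1 h1]
    with y hy0 hy1
  exact ⟨not_le.1 hy0, not_not.1 hy1⟩

lemma map_toGaussian : ρ.map (toGaussian ρ) = γ₁ := by
  refine Measure.ext_of_Iic _ _ fun z ↦ ?_
  rw [Measure.map_apply (measurable_toGaussian ρ) measurableSet_Iic, ← ofReal_cdf γ₁,
    ← measure_cdf_le ρ (cdf_gaussian_mem_Ioo z)]
  refine measure_congr ?_
  filter_upwards [ae_cdf_mem_Ioo ρ] with y hy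
  refine propext ?_
  change toGaussian ρ y ≤ z ↔ cdf ρ y ≤ cdf γ₁ z
  rw [toGaussian, ← strictMono_cdf_gaussian.le_iff_le, cdf_gaussianQuantile hy]

lemma integrable_toGaussian_sq : Integrable (fun y ↦ toGaussian ρ y ^ 2) ρ := by
  have h : Integrable (fun z : ℝ ↦ z ^ 2) γ₁ := (memLp_id_gaussianReal 2).integrable_sq
  rw [← map_toGaussian ρ] at h
  exact h.comp_measurable (measurable_toGaussian ρ)

lemma integral_toGaussian_sq : ∫ y, toGaussian ρ y ^ 2 ∂ρ = 1 := by
  have h : ∫ z : ℝ, z ^ 2 ∂γ₁ = 1 := by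
    have h1 := variance_id_gaussianReal (μ := 0) (v := 1)
    rw [variance_of_integral_eq_zero measurable_id.aemeasurable
      (by simp [integral_id_gaussianReal])] at h1
    simpa using h1
  rw [← h, ← map_toGaussian ρ, integral_map (by fun_prop) (by fun_prop)]

lemma integrable_toGaussian : Integrable (toGaussian ρ) ρ := by
  have h : Integrable (fun z : ℝ ↦ z) γ₁ := (memLp_id_gaussianReal 1).integrable le_rfl
  rw [← map_toGaussian ρ] at h
  exact h.comp_measurable (measurable_toGaussian ρ)

lemma integral_toGaussian : ∫ y, toGaussian ρ y ∂ρ = 0 := by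
  rw [← integral_id_gaussianReal (μ := 0) (v := 1), ← map_toGaussian ρ,
    integral_map (by fun_prop) (by fun_prop)]

lemma setIntegral_Ioi_toGaussian {s : ℝ} (hs : cdf ρ s ∈ Ioo (0 : ℝ) 1) :
    ∫ t in Ioi s, toGaussian ρ t ∂ρ = gaussianPDFReal 0 1 (toGaussian ρ s) := by
  have hset : toGaussian ρ ⁻¹' Ioi (toGaussian ρ s) =ᵐ[ρ] Ioi s := by
    refine ae_eq_of_ae_subset_of_measure_ge ?_ ?_
      ((measurable_toGaussian ρ) measurableSet_Ioi).nullMeasurableSet (measure_ne_top _ _)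
    · filter_upwards [ae_cdf_mem_Ioo ρ] with t ht h
      have h' := (toGaussian_lt_iff ρ ht).1 h
      rw [toGaussian, cdf_gaussianQuantile hs] at h'
      exact (monotone_cdf ρ).reflect_lt h'
    · rw [← Measure.map_apply (measurable_toGaussian ρ) measurableSet_Ioi, map_toGaussian,
        ← compl_Iic, ← compl_Iic, prob_compl_eq_one_sub measurableSet_Iic,
        prob_compl_eq_one_sub measurableSet_Iic, ← ofReal_cdf, ← ofReal_cdf γ₁, toGaussian,
        cdf_gaussianQuantile hs]
  rw [← integral_Ioi_id_gaussian, ← setIntegral_congr_set hset, ← map_toGaussian ρ,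
    setIntegral_map measurableSet_Ioi (by fun_prop) (by fun_prop)]

lemma setIntegral_Ioi_toGaussian_nonneg (s : ℝ) : 0 ≤ ∫ t in Ioi s, toGaussian ρ t ∂ρ := by
  by_cases hs : cdf ρ s ∈ Ioo (0 : ℝ) 1
  · rw [setIntegral_Ioi_toGaussian ρ hs]
    exact gaussianPDFReal_nonneg _ _ _
  refine ge_of_eq ?_
  rcases (cdf_nonneg ρ s).eq_or_lt with h0 | h0
  · have h : ρ (Iic s) = 0 := by rw [← ofReal_cdf, ← h0, ENNReal.ofReal_zero]
    have : Ioi s =ᵐ[ρ] univ := by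
      rw [ae_eq_univ, compl_Ioi, h]
    rw [setIntegral_congr_set this, setIntegral_univ, integral_toGaussian]
  · have h1 : cdf ρ s = 1 := le_antisymm (cdf_le_one ρ s) (not_lt.1 fun h ↦ hs ⟨h0, h⟩)
    have h : ρ (Ioi s) = 0 := by
      rw [← compl_Iic, prob_compl_eq_one_sub measurableSet_Iic, ← ofReal_cdf, h1]
      simp
    rw [setIntegral_measure_zero _ h]

lemma integrable_and_integral_setIntegral_Ioi_toGaussian (hρ : Integrable (fun y ↦ y ^ 2) ρ) :
    Integrable (fun s ↦ ∫ t in Ioi s, toGaussian ρ t ∂ρ) ∧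
      ∫ s, ∫ t in Ioi s, toGaussian ρ t ∂ρ = ∫ t, t * toGaussian ρ t ∂ρ := by
  let k : ℝ × ℝ → ℝ := fun p ↦ (if 0 ≤ p.1 ∧ p.1 < p.2 then 1 else 0) -
    (if p.2 ≤ p.1 ∧ p.1 < 0 then 1 else 0)
  have hk : Measurable k := by
    refine Measurable.sub ?_ ?_ <;> refine Measurable.ite ?_ measurable_const measurable_const
    · exact (measurableSet_le measurable_const measurable_fst).inter
        (measurableSet_lt measurable_fst measurable_snd)
    · exact (measurableSet_le measurable_snd measurable_fst).inter
        (measurableSet_lt measurable_fst measurable_const)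
  have hk_eq (t : ℝ) : (fun s ↦ k (s, t)) =
      fun s ↦ (Ico 0 t).indicator 1 s - (Ico t 0).indicator 1 s := by
    ext s
    simp [k, indicator_apply]
  have hk_norm (t : ℝ) : (fun s ↦ ‖k (s, t)‖) =
      fun s ↦ (Ico 0 t).indicator 1 s + (Ico t 0).indicator 1 s := by
    ext s
    simp only [k, indicator_apply, mem_Ico, Pi.one_apply, Real.norm_eq_abs]
    split_ifs <;> first | (exfalso; linarith) | simp
  have hint (a b : ℝ) : Integrable ((Ico a b).indicator (1 : ℝ → ℝ)) :=
    (integrable_indicator_iff measurableSet_Ico).2 (integrableOn_const (by simp))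
  have hval (a b : ℝ) : ∫ s, (Ico a b).indicator (1 : ℝ → ℝ) s = max (b - a) 0 := by
    rw [integral_indicator_one measurableSet_Ico, Real.volume_real_Ico]
  have hk_int (t : ℝ) : ∫ s, k (s, t) = t := by
    rw [hk_eq, integral_sub (hint _ _) (hint _ _), hval, hval]
    rcases le_total 0 t with h | h <;> simp [h]
  have hk_int_norm (t : ℝ) : ∫ s, ‖k (s, t)‖ = |t| := by
    rw [hk_norm, integral_add (hint _ _) (hint _ _), hval, hval]
    rcases le_total 0 t with h | h <;> simp [h, abs_of_nonneg, abs_of_nonpos]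
  have hmul : Integrable (fun t ↦ t * toGaussian ρ t) ρ :=
    MemLp.integrable_mul
      ((memLp_two_iff_integrable_sq (by fun_prop)).2 hρ)
      ((memLp_two_iff_integrable_sq (by fun_prop)).2 (integrable_toGaussian_sq ρ))
  have hK : Integrable (fun p : ℝ × ℝ ↦ k p * toGaussian ρ p.2) (volume.prod ρ) := by
    rw [integrable_prod_iff' (by fun_prop)]
    refine ⟨ae_of_all _ fun t ↦ ?_, ?_⟩
    · have h : Integrable (fun s ↦ k (s, t)) := by
        rw [hk_eq]
        exact (hint _ _).sub (hint _ _)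
      exact h.mul_const (toGaussian ρ t)
    · simp only [norm_mul, integral_mul_const, hk_int_norm]
      simpa only [norm_mul, Real.norm_eq_abs] using hmul.norm
  have hH (s : ℝ) : ∫ t, k (s, t) * toGaussian ρ t ∂ρ = ∫ t in Ioi s, toGaussian ρ t ∂ρ := by
    have h (t : ℝ) : k (s, t) * toGaussian ρ t = (Ioi s).indicator (toGaussian ρ) t -
        (if s < 0 then 1 else 0) * toGaussian ρ t := by
      simp only [k, indicator_apply, mem_Ioi]
      split_ifs <;> first | (exfalso; linarith) | grind
    simp_rw [h]
    rw [integral_sub ((integrable_toGaussian ρ).indicator measurableSet_Ioi)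
      ((integrable_toGaussian ρ).const_mul _), integral_const_mul, integral_toGaussian,
      integral_indicator measurableSet_Ioi]
    simp
  refine ⟨by simpa only [hH] using hK.integral_prod_left, ?_⟩
  calc ∫ s, ∫ t in Ioi s, toGaussian ρ t ∂ρ = ∫ s, ∫ t, k (s, t) * toGaussian ρ t ∂ρ := by
        simp only [hH]
    _ = ∫ t, (∫ s, k (s, t) * toGaussian ρ t) ∂ρ := integral_integral_swap hK
    _ = _ := by simp only [integral_mul_const, hk_int]

end NoAtoms

lemma mul_le_klFun_add_exp {a : ℝ} (ha : 0 ≤ a) (b : ℝ) :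
    a * b ≤ InformationTheory.klFun a + Real.exp b := by
  rw [InformationTheory.klFun_apply]
  rcases ha.eq_or_lt with rfl | ha
  · simp; positivity
  have h := Real.log_le_sub_one_of_pos (show 0 < Real.exp b / a by positivity)
  rw [Real.log_div (by positivity) ha.ne', Real.log_exp] at h
  have h' := mul_le_mul_of_nonneg_left h ha.le
  have : a * (Real.exp b / a - 1) = Real.exp b - a := by field_simp
  rw [this] at h'
  linarith

lemma integrable_sq_of_klDiv_gaussian_ne_top {ρ : Measure ℝ} [IsProbabilityMeasure ρ]
    (h : InformationTheory.klDiv ρ γ₁ ≠ ∞) : Integrable (fun y ↦ y ^ 2) ρ := by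
  obtain ⟨hac, hint⟩ := InformationTheory.klDiv_ne_top_iff.1 h
  have hexp : Integrable (fun y : ℝ ↦ Real.exp (y ^ 2 / 4)) γ₁ := by
    rw [gaussianReal_of_var_ne_zero _ one_ne_zero, integrable_withDensity_iff
      (measurable_gaussianPDF _ _) (ae_of_all _ fun _ ↦ gaussianPDF_lt_top)]
    refine ((integrable_exp_neg_mul_sq (b := 1 / 4) (by norm_num)).const_mul
      (√(2 * Real.pi))⁻¹).congr (ae_of_all _ fun y ↦ ?_)
    simp only [toReal_gaussianPDF, gaussianPDFReal, NNReal.coe_one, mul_one, sub_zero]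
    rw [mul_left_comm, ← Real.exp_add]
    congr 2
    ring
  have h4 : Integrable (fun y : ℝ ↦ y ^ 2 / 4) ρ := by
    rw [← integrable_rnDeriv_smul_iff hac]
    refine (((InformationTheory.integrable_klFun_rnDeriv_iff hac).2 hint).add hexp).mono'
      (by fun_prop) (ae_of_all _ fun y ↦ ?_)
    rw [Real.norm_of_nonneg (by simp only [smul_eq_mul]; positivity)]
    exact mul_le_klFun_add_exp ENNReal.toReal_nonneg _
  exact (h4.const_mul 4).congr (ae_of_all _ fun y ↦ by ring)

/-- **Talagrand's inequality on the line**, realised by the increasing rearrangement. -/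
lemma lintegral_sub_toGaussian_sq_le (ρ : Measure ℝ) [IsProbabilityMeasure ρ] :
    ∫⁻ y, ENNReal.ofReal ((toGaussian ρ y - y) ^ 2) ∂ρ ≤ 2 * InformationTheory.klDiv ρ γ₁ := by
  by_cases hkl : InformationTheory.klDiv ρ γ₁ = ∞
  · simp [hkl]
  obtain ⟨hac, hint⟩ := InformationTheory.klDiv_ne_top_iff.1 hkl
  have : NullSingletonClass ρ := ⟨fun x ↦ hac (measure_singleton x)⟩
  have hsq := integrable_sq_of_klDiv_gaussian_ne_top hkl
  obtain ⟨hHint, hHval⟩ := integrable_and_integral_setIntegral_Ioi_toGaussian ρ hsq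
  set H : ℝ → ℝ := fun s ↦ ∫ t in Ioi s, toGaussian ρ t ∂ρ
  set φ : ℝ → ℝ := gaussianPDFReal 0 1 with hφ
  have hφpos (y : ℝ) : 0 < φ y := gaussianPDFReal_pos _ _ _ one_ne_zero
  have hHnn (y : ℝ) : 0 ≤ H y := setIntegral_Ioi_toGaussian_nonneg ρ y
  set f : ℝ → ℝ := fun y ↦ (ρ.rnDeriv γ₁ y).toReal
  have hfnn (y : ℝ) : 0 ≤ f y := ENNReal.toReal_nonneg
  let r : ℝ → ℝ := fun y ↦ H y / (f y * φ y)
  have hHmeas : AEStronglyMeasurable H γ₁ :=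
    hHint.1.mono_ac (gaussianReal_absolutelyContinuous 0 one_ne_zero)
  have hquot : Integrable (fun y ↦ H y / φ y) γ₁ ∧ ∫ y, H y / φ y ∂γ₁ = ∫ y, H y := by
    have h (y : ℝ) : φ y * (H y / φ y) = H y := mul_div_cancel₀ _ (hφpos y).ne'
    constructor
    · rw [gaussianReal_of_var_ne_zero _ one_ne_zero, integrable_withDensity_iff_integrable_smul'
        (measurable_gaussianPDF _ _) (ae_of_all _ fun _ ↦ gaussianPDF_lt_top)]
      simpa only [toReal_gaussianPDF, smul_eq_mul, ← hφ, h] using hHint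
    · rw [integral_gaussianReal_eq_integral_smul one_ne_zero]
      simp only [smul_eq_mul, ← hφ, h]
  have hfr (y : ℝ) : f y * r y ≤ H y / φ y := by
    rcases (hfnn y).eq_or_lt with h0 | h0
    · rw [← h0, zero_mul]
      exact div_nonneg (hHnn y) (hφpos y).le
    · refine le_of_eq ?_
      have := (hφpos y).ne'
      have := h0.ne'
      simp only [r]
      field_simp
  have hrnn (y : ℝ) : 0 ≤ r y :=
    div_nonneg (hHnn y) (mul_nonneg (hfnn y) (hφpos y).le)
  have hfr_int : Integrable (fun y ↦ f y • r y) γ₁ := by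
    refine hquot.1.mono' ?_ (ae_of_all _ fun y ↦ ?_)
    · have hφm : Measurable φ := measurable_gaussianPDFReal _ _
      have hfm : Measurable f := by fun_prop
      exact hfm.aestronglyMeasurable.smul
        (hHmeas.aemeasurable.div (hfm.mul hφm).aemeasurable).aestronglyMeasurable
    · rw [smul_eq_mul, Real.norm_of_nonneg (mul_nonneg (hfnn y) (hrnn y))]
      exact hfr y
  have hr_int : Integrable r ρ := (integrable_rnDeriv_smul_iff hac).1 hfr_int
  have hr_le : ∫ y, r y ∂ρ ≤ ∫ y, y * toGaussian ρ y ∂ρ := by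
    rw [← integral_rnDeriv_smul hac, ← hHval, ← hquot.2]
    exact integral_mono hfr_int hquot.1 hfr
  have hS2 := integrable_toGaussian_sq ρ
  have hmul : Integrable (fun t ↦ t * toGaussian ρ t) ρ :=
    MemLp.integrable_mul
      ((memLp_two_iff_integrable_sq (by fun_prop)).2 hsq)
      ((memLp_two_iff_integrable_sq (by fun_prop)).2 hS2)
  have hpt : ∀ᵐ y ∂ρ, y ^ 2 / 2 - toGaussian ρ y ^ 2 / 2 + 1 - r y ≤ llr ρ γ₁ y := by
    filter_upwards [ae_cdf_mem_Ioo ρ, Measure.rnDeriv_pos hac,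
      hac.ae_le (Measure.rnDeriv_ne_top ρ γ₁)] with y hy hpos htop
    have hfpos : 0 < f y := ENNReal.toReal_pos hpos.ne' htop
    have hHy : H y = φ (toGaussian ρ y) := setIntegral_Ioi_toGaussian ρ hy
    have hrpos : 0 < r y := div_pos (hHy ▸ hφpos _) (mul_pos hfpos (hφpos y))
    have hlog := Real.log_le_sub_one_of_pos hrpos
    have hlogφ (x : ℝ) : Real.log (φ x) = Real.log (√(2 * Real.pi))⁻¹ - x ^ 2 / 2 := by
      rw [hφ, gaussianPDFReal, Real.log_mul (by positivity) (by positivity), Real.log_exp]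
      simp
      ring
    have hlogr : Real.log (r y) = Real.log (φ (toGaussian ρ y)) -
        (Real.log (f y) + Real.log (φ y)) := by
      rw [← Real.log_mul hfpos.ne' (hφpos y).ne',
        ← Real.log_div (hφpos _).ne' (mul_pos hfpos (hφpos y)).ne', ← hHy]
    rw [hlogr, hlogφ, hlogφ] at hlog
    change _ ≤ Real.log (f y)
    linarith
  have hsub : Integrable (fun y ↦ (toGaussian ρ y - y) ^ 2) ρ := by
    refine ((hS2.add hsq).sub (hmul.const_mul 2)).congr (ae_of_all _ fun y ↦ ?_)
    simp only [Pi.add_apply, Pi.sub_apply]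
    ring
  have hkey : ∫ y, (toGaussian ρ y - y) ^ 2 ∂ρ ≤ 2 * ∫ y, llr ρ γ₁ y ∂ρ := by
    have hadd : Integrable (fun y ↦ toGaussian ρ y ^ 2 + y ^ 2) ρ := hS2.add hsq
    have hdiff : Integrable (fun y ↦ y ^ 2 / 2 - toGaussian ρ y ^ 2 / 2) ρ :=
      (hsq.div_const 2).sub (hS2.div_const 2)
    have hdiff1 : Integrable (fun y ↦ y ^ 2 / 2 - toGaussian ρ y ^ 2 / 2 + 1) ρ :=
      hdiff.add (integrable_const 1)
    have h1 := integral_mono_ae (hdiff1.sub hr_int) hint hpt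
    have h2 : ∫ y, (toGaussian ρ y - y) ^ 2 ∂ρ =
        ∫ y, toGaussian ρ y ^ 2 ∂ρ + ∫ y, y ^ 2 ∂ρ - 2 * ∫ y, y * toGaussian ρ y ∂ρ := by
      rw [← integral_add hS2 hsq, ← integral_const_mul, ← integral_sub hadd
        (hmul.const_mul 2)]
      congr with y
      ring
    have h3 : ∫ y, (y ^ 2 / 2 - toGaussian ρ y ^ 2 / 2 + 1 - r y) ∂ρ =
        (∫ y, y ^ 2 ∂ρ) / 2 - (∫ y, toGaussian ρ y ^ 2 ∂ρ) / 2 + 1 - ∫ y, r y ∂ρ := by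
      rw [integral_sub hdiff1 hr_int, integral_add hdiff (integrable_const 1),
        integral_sub (hsq.div_const 2) (hS2.div_const 2), integral_div, integral_div]
      simp
    rw [integral_toGaussian_sq] at h2 h3
    have h1' := h3.symm.trans_le h1
    linarith
  rw [← ofReal_integral_eq_lintegral_ofReal hsub (ae_of_all _ fun y ↦ sq_nonneg _),
    InformationTheory.klDiv_of_ac_of_integrable hac hint]
  simp only [probReal_univ, add_sub_cancel_right]
  rw [← ENNReal.ofReal_ofNat 2, ← ENNReal.ofReal_mul (by norm_num)]
  exact ENNReal.ofReal_le_ofReal hkey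

end GaussianRearrangement

section ChainRule

open ProbabilityTheory hiding stdGaussian

variable {X Y : Type*} {mX : MeasurableSpace X} {mY : MeasurableSpace Y}

/-- The conditional relative entropy is the average of the relative entropies of the fibres. -/
lemma klDiv_compProd_right_eq_lintegral [MeasurableSpace.CountableOrCountablyGenerated X Y]
    (μ : Measure X) [IsFiniteMeasure μ] (κ η : Kernel X Y) [IsMarkovKernel κ] [IsMarkovKernel η]
    (hac : μ ⊗ₘ κ ≪ μ ⊗ₘ η) :
    InformationTheory.klDiv (μ ⊗ₘ κ) (μ ⊗ₘ η) =
      ∫⁻ a, InformationTheory.klDiv (κ a) (η a) ∂μ := by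
  have hac' := Measure.absolutelyContinuous_compProd_right_iff.1 hac
  have hdens : μ ⊗ₘ κ = (μ ⊗ₘ η).withDensity fun p ↦ κ.rnDeriv η p.1 p.2 := by
    rw [← Measure.compProd_withDensity (Kernel.measurable_rnDeriv κ η)]
    refine Measure.compProd_congr ?_
    filter_upwards [hac'] with a ha
    exact (Kernel.withDensity_rnDeriv_eq ha).symm
  have hderiv : (μ ⊗ₘ κ).rnDeriv (μ ⊗ₘ η) =ᵐ[μ ⊗ₘ η] fun p ↦ κ.rnDeriv η p.1 p.2 := by
    rw [hdens]
    exact Measure.rnDeriv_withDensity _ (Kernel.measurable_rnDeriv κ η)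
  have hmeas : Measurable fun p : X × Y ↦
      ENNReal.ofReal (InformationTheory.klFun (κ.rnDeriv η p.1 p.2).toReal) :=
    (InformationTheory.measurable_klFun.comp
      (Kernel.measurable_rnDeriv κ η).ennreal_toReal).ennreal_ofReal
  calc InformationTheory.klDiv (μ ⊗ₘ κ) (μ ⊗ₘ η)
      = ∫⁻ p, ENNReal.ofReal (InformationTheory.klFun (κ.rnDeriv η p.1 p.2).toReal)
          ∂(μ ⊗ₘ η) := by
        rw [InformationTheory.klDiv_eq_lintegral_klFun_of_ac hac]
        refine lintegral_congr_ae ?_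
        filter_upwards [hderiv] with p hp
        rw [hp]
    _ = ∫⁻ a, InformationTheory.klDiv (κ a) (η a) ∂μ := by
        rw [Measure.lintegral_compProd hmeas]
        refine lintegral_congr_ae ?_
        filter_upwards [hac'] with a ha
        rw [InformationTheory.klDiv_eq_lintegral_klFun_of_ac ha]
        refine lintegral_congr_ae ?_
        filter_upwards [Kernel.rnDeriv_eq_rnDeriv_measure (κ := κ) (η := η) (a := a)] with b hb
        rw [hb]

end ChainRule

section Tensorization

open ProbabilityTheory hiding stdGaussian

local notation "γ₁" => gaussianReal 0 1

variable {X Y : Type*} {mX : MeasurableSpace X} {mY : MeasurableSpace Y}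

/-- The measure `m` satisfies the transport-entropy inequality with cost `c`: every probability
measure `ν` can be coupled to `m` at cost at most `2 * D_KL(ν ‖ m)`. -/
def TransportEntropy (m : Measure X) (c : X × X → ℝ≥0∞) : Prop :=
  ∀ ν : Measure X, IsProbabilityMeasure ν →
    ∃ π : Measure (X × X), IsProbabilityMeasure π ∧ π.map Prod.fst = m ∧ π.map Prod.snd = ν ∧
      ∫⁻ p, c p ∂π ≤ 2 * InformationTheory.klDiv ν m

lemma transportEntropy_zero (m : Measure X) [IsProbabilityMeasure m] : TransportEntropy m 0 :=
  fun ν _ ↦ ⟨m.prod ν, inferInstance, by simp, by simp, by simp⟩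

lemma TransportEntropy.map_equiv {m : Measure X} [IsProbabilityMeasure m] {c : X × X → ℝ≥0∞}
    (h : TransportEntropy m c) (e : X ≃ᵐ Y) {c' : Y × Y → ℝ≥0∞} (hc' : Measurable c')
    (hcc' : ∀ p, c' (Prod.map e e p) = c p) : TransportEntropy (m.map e) c' := by
  intro ν _
  have : IsProbabilityMeasure (ν.map e.symm) :=
    Measure.isProbabilityMeasure_map e.symm.measurable.aemeasurable
  have : IsProbabilityMeasure (m.map e) :=
    Measure.isProbabilityMeasure_map e.measurable.aemeasurable
  obtain ⟨π, _, hfst, hsnd, hπ⟩ := h (ν.map e.symm) inferInstance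
  have he : Measurable (Prod.map e e) := e.measurable.prodMap e.measurable
  refine ⟨π.map (Prod.map e e), Measure.isProbabilityMeasure_map he.aemeasurable, ?_, ?_, ?_⟩
  · rw [Measure.map_map measurable_fst he, ← hfst, Measure.map_map e.measurable measurable_fst]
    rfl
  · rw [Measure.map_map measurable_snd he]
    change π.map (e ∘ Prod.snd) = ν
    rw [← Measure.map_map e.measurable measurable_snd, hsnd, MeasurableEquiv.map_map_symm]
  · rw [lintegral_map hc' he]
    simp only [hcc']
    refine hπ.trans ?_
    gcongr
    conv_lhs => rw [← e.map_symm_map (μ := m)]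
    exact InformationTheory.klDiv_map_le _ _ e.symm.measurable

lemma measurable_toGaussian_kernel (κ : Kernel X ℝ) [IsMarkovKernel κ] :
    Measurable fun p : X × ℝ ↦ toGaussian (κ p.1) p.2 := by
  refine measurable_gaussianQuantile.comp ?_
  simp only [cdf_eq_real]
  have h : MeasurableSet {q : (X × ℝ) × ℝ | q.2 ≤ q.1.2} :=
    measurableSet_le measurable_snd (measurable_snd.comp measurable_fst)
  exact (Kernel.measurable_kernel_prodMk_left
    (κ := κ.comap Prod.fst measurable_fst) h).ennreal_toReal

/-- Tensorization: adding an independent standard Gaussian coordinate preserves the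
transport-entropy inequality. -/
lemma TransportEntropy.prod_gaussian {m : Measure X} [IsProbabilityMeasure m]
    {c : X × X → ℝ≥0∞} (hc : Measurable c) (h : TransportEntropy m c) :
    TransportEntropy (m.prod γ₁)
      fun p ↦ c (p.1.1, p.2.1) + ENNReal.ofReal ((p.1.2 - p.2.2) ^ 2) := by
  intro ν _
  by_cases hkl : InformationTheory.klDiv ν (m.prod γ₁) = ∞
  · exact ⟨(m.prod γ₁).prod ν, inferInstance, by simp, by simp, by simp [hkl]⟩
  set κ := ν.condKernel
  set μ := ν.fst
  have hν : μ ⊗ₘ κ = ν := ν.disintegrate κ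
  have hchain : InformationTheory.klDiv ν (m.prod γ₁) = InformationTheory.klDiv μ m +
      InformationTheory.klDiv (μ ⊗ₘ κ) (μ ⊗ₘ Kernel.const X γ₁) := by
    rw [← InformationTheory.klDiv_compProd_eq_add, hν, Measure.compProd_const]
  have hac : μ ⊗ₘ κ ≪ μ ⊗ₘ Kernel.const X γ₁ :=
    (InformationTheory.klDiv_ne_top_iff.1 fun htop ↦ hkl (by rw [hchain, htop, add_top])).1
  rw [klDiv_compProd_right_eq_lintegral _ _ _ hac] at hchain
  simp only [Kernel.const_apply] at hchain
  have hac' : ∀ᵐ x ∂μ, κ x ≪ γ₁ := Measure.absolutelyContinuous_compProd_right_iff.1 hac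
  obtain ⟨π, _, hfst, hsnd, hπ⟩ := h μ inferInstance
  have hmap : ∀ᵐ q ∂π, (κ q.2).map (toGaussian (κ q.2)) = γ₁ := by
    rw [← hsnd] at hac'
    filter_upwards [ae_of_ae_map measurable_snd.aemeasurable hac'] with q hq
    have : NullSingletonClass (κ q.2) := ⟨fun x ↦ hq (measure_singleton x)⟩
    exact map_toGaussian _
  have hS := measurable_toGaussian_kernel κ
  let T : (X × X) × ℝ → (X × ℝ) × (X × ℝ) :=
    fun q ↦ ((q.1.1, toGaussian (κ q.1.2) q.2), (q.1.2, q.2))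
  have hT : Measurable T :=
    (measurable_fst.fst.prodMk (hS.comp (measurable_fst.snd.prodMk measurable_snd))).prodMk
      (measurable_fst.snd.prodMk measurable_snd)
  set Γ := (π ⊗ₘ κ.comap Prod.snd measurable_snd).map T
  have hΓ {g : (X × ℝ) × (X × ℝ) → ℝ≥0∞} (hg : Measurable g) : ∫⁻ p, g p ∂Γ =
      ∫⁻ q, ∫⁻ y, g ((q.1, toGaussian (κ q.2) y), (q.2, y)) ∂(κ q.2) ∂π := by
    rw [lintegral_map hg hT, Measure.lintegral_compProd (f := fun q ↦ g (T q)) (hg.comp hT)]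
    rfl
  refine ⟨Γ, Measure.isProbabilityMeasure_map hT.aemeasurable, ?_, ?_, ?_⟩
  · refine Measure.ext_of_lintegral _ fun f hf ↦ ?_
    rw [lintegral_map hf measurable_fst, hΓ (g := fun p ↦ f p.1) (hf.comp measurable_fst),
      lintegral_prod _ hf.aemeasurable, ← hfst,
      lintegral_map hf.lintegral_prod_right' measurable_fst]
    refine lintegral_congr_ae ?_
    filter_upwards [hmap] with q hq
    rw [← hq, lintegral_map (f := fun z ↦ f (q.1, z)) (hf.comp measurable_prodMk_left)
      (measurable_toGaussian _)]
  · refine Measure.ext_of_lintegral _ fun f hf ↦ ?_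
    rw [lintegral_map hf measurable_snd, hΓ (g := fun p ↦ f p.2) (hf.comp measurable_snd), ← hν,
      Measure.lintegral_compProd hf, ← hsnd,
      lintegral_map hf.lintegral_kernel_prod_right' measurable_snd]
  · have hline : Measurable fun p : X × ℝ ↦
        ENNReal.ofReal ((toGaussian (κ p.1) p.2 - p.2) ^ 2) :=
      ((hS.sub measurable_snd).pow_const 2).ennreal_ofReal
    rw [hΓ (by fun_prop)]
    calc ∫⁻ q, ∫⁻ y, c (q.1, q.2) + ENNReal.ofReal ((toGaussian (κ q.2) y - y) ^ 2) ∂(κ q.2) ∂π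
        = ∫⁻ q, c q ∂π +
            ∫⁻ x, ∫⁻ y, ENNReal.ofReal ((toGaussian (κ x) y - y) ^ 2) ∂(κ x) ∂μ := by
          rw [← hsnd, lintegral_map hline.lintegral_kernel_prod_right' measurable_snd,
            ← lintegral_add_left hc]
          refine lintegral_congr fun q ↦ ?_
          rw [lintegral_add_left measurable_const]
          simp
      _ ≤ 2 * InformationTheory.klDiv μ m + ∫⁻ x, 2 * InformationTheory.klDiv (κ x) γ₁ ∂μ :=
          add_le_add hπ (lintegral_mono fun x ↦ lintegral_sub_toGaussian_sq_le (κ x))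
      _ = 2 * InformationTheory.klDiv ν (m.prod γ₁) := by
          rw [lintegral_const_mul' _ _ (by simp), hchain, mul_add]

/-- **Talagrand's inequality** for the product Gaussian measure on `ℝ^d`. -/
lemma transportEntropy_pi_gaussian (d : ℕ) :
    TransportEntropy (Measure.pi fun _ : Fin d ↦ γ₁)
      fun p ↦ ∑ i, ENNReal.ofReal ((p.1 i - p.2 i) ^ 2) := by
  induction d with
  | zero =>
    convert transportEntropy_zero (Measure.pi fun _ : Fin 0 ↦ γ₁)
    simp
  | succ d ih =>
    let e := (MeasurableEquiv.piFinSuccAbove (fun _ : Fin (d + 1) ↦ ℝ) 0).trans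
      MeasurableEquiv.prodComm
    have he : MeasurePreserving e (Measure.pi fun _ ↦ γ₁)
        ((Measure.pi fun _ : Fin d ↦ γ₁).prod γ₁) :=
      (measurePreserving_piFinSuccAbove (fun _ : Fin (d + 1) ↦ γ₁) 0).trans
        Measure.measurePreserving_swap
    rw [← (he.symm e).map_eq]
    refine (ih.prod_gaussian (by fun_prop)).map_equiv e.symm (by fun_prop) fun p ↦ ?_
    rw [Fin.sum_univ_succ, add_comm]
    rfl

end Tensorization

section EuclideanGaussian

open ProbabilityTheory hiding stdGaussian

local notation "γ₁" => gaussianReal 0 1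

lemma map_withDensity_of_measurePreserving {X Y : Type*} {mX : MeasurableSpace X}
    {mY : MeasurableSpace Y} {μ : Measure X} {ν : Measure Y} {f : X → Y}
    (hf : MeasurePreserving f μ ν) {g : Y → ℝ≥0∞} (hg : Measurable g) :
    (μ.withDensity fun x ↦ g (f x)).map f = ν.withDensity g := by
  ext s hs
  rw [Measure.map_apply hf.measurable hs, withDensity_apply _ (hf.measurable hs),
    withDensity_apply _ hs, hf.setLIntegral_comp_preimage hs hg]

lemma pi_withDensity {E : Type*} [MeasurableSpace E] (μ : Measure E) [SigmaFinite μ]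
    {f : E → ℝ≥0∞} (hf : Measurable f) [SigmaFinite (μ.withDensity f)] (d : ℕ) :
    Measure.pi (fun _ : Fin d ↦ μ.withDensity f) =
      (Measure.pi fun _ : Fin d ↦ μ).withDensity fun x ↦ ∏ i, f (x i) := by
  induction d with
  | zero =>
    rw [Measure.pi_of_empty _ isEmptyElim, Measure.pi_of_empty _ isEmptyElim]
    simp
  | succ d ih =>
    let e := MeasurableEquiv.piFinSuccAbove (fun _ : Fin (d + 1) ↦ E) 0
    have h : Measurable fun x : Fin d → E ↦ ∏ i, f (x i) := by fun_prop
    apply e.map_measurableEquiv_injective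
    rw [(measurePreserving_piFinSuccAbove (fun _ : Fin (d + 1) ↦ μ.withDensity f) 0).map_eq, ih,
      prod_withDensity hf h, ← map_withDensity_of_measurePreserving
        (measurePreserving_piFinSuccAbove (fun _ : Fin (d + 1) ↦ μ) 0) (by fun_prop)]
    simp only [Fin.prod_univ_succ]
    rfl

lemma stdGaussian_eq_map_pi (d : ℕ) :
    stdGaussian d = (Measure.pi fun _ : Fin d ↦ γ₁).map (MeasurableEquiv.toLp 2 (Fin d → ℝ)) := by
  have hsf : SigmaFinite ((volume : Measure ℝ).withDensity (gaussianPDF 0 1)) := by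
    rw [← gaussianReal_of_var_ne_zero 0 one_ne_zero]
    infer_instance
  have hdens (x : Fin d → ℝ) : ∏ i, gaussianPDF 0 1 (x i) =
      ENNReal.ofReal ((2 * Real.pi) ^ (-(d : ℝ) / 2) *
        Real.exp (-‖MeasurableEquiv.toLp 2 (Fin d → ℝ) x‖ ^ 2 / 2)) := by
    simp only [gaussianPDF]
    rw [← ENNReal.ofReal_prod_of_nonneg fun i _ ↦ gaussianPDFReal_nonneg _ _ _]
    simp only [gaussianPDFReal, NNReal.coe_one, mul_one, sub_zero]
    rw [Finset.prod_mul_distrib, ← Real.exp_sum, EuclideanSpace.real_norm_sq_eq]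
    congr 2
    · rw [Finset.prod_const, Finset.card_univ, Fintype.card_fin, Real.sqrt_eq_rpow,
        ← Real.rpow_neg (by positivity), ← Real.rpow_mul_natCast (by positivity)]
      congr 1
      ring
    · rw [← Finset.sum_div, Finset.sum_neg_distrib]
      rfl
  rw [gaussianReal_of_var_ne_zero 0 one_ne_zero, pi_withDensity _ (measurable_gaussianPDF 0 1)]
  simp only [hdens]
  exact (map_withDensity_of_measurePreserving (PiLp.volume_preserving_toLp (Fin d))
    (by fun_prop)).symm

lemma klDiv_eq_informationTheory_klDiv {X : Type*} [MeasurableSpace X] (ν μ : Measure X)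
    [IsProbabilityMeasure ν] [IsProbabilityMeasure μ] :
    klDiv ν μ = InformationTheory.klDiv ν μ := by
  simp [klDiv, InformationTheory.klDiv]

end EuclideanGaussian

/-- **Talagrand's transportation-cost inequality** for the standard Gaussian:
for any probability measure `ν` with `D_KL(ν‖γ_d) < ∞`, the infimum of the quadratic
transport cost over couplings of `γ_d` and `ν` satisfies
`W₂(γ_d, ν)² ≤ 2 · D_KL(ν‖γ_d)`. -/
theorem talagrand_inequality_gaussian {d : ℕ}
    (ν : Measure (EuclideanSpace ℝ (Fin d))) [IsProbabilityMeasure ν]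
    (hKL : klDiv ν (stdGaussian d) < ∞) :
    W2sq (stdGaussian d) ν ≤ 2 * klDiv ν (stdGaussian d) := by
  have htransport : TransportEntropy (stdGaussian d)
      fun p ↦ ENNReal.ofReal (‖p.1 - p.2‖ ^ 2) := by
    rw [stdGaussian_eq_map_pi]
    refine (transportEntropy_pi_gaussian d).map_equiv (MeasurableEquiv.toLp 2 (Fin d → ℝ))
      (by fun_prop) fun p ↦ ?_
    rw [EuclideanSpace.real_norm_sq_eq, ENNReal.ofReal_sum_of_nonneg fun i _ ↦ sq_nonneg _]
    rfl
  have : IsProbabilityMeasure (stdGaussian d) := by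
    rw [stdGaussian_eq_map_pi]
    exact Measure.isProbabilityMeasure_map (MeasurableEquiv.measurable _).aemeasurable
  obtain ⟨π, hπ, hfst, hsnd, hcost⟩ := htransport ν inferInstance
  rw [klDiv_eq_informationTheory_klDiv]
  refine le_trans (sInf_le ?_) hcost
  exact ⟨π, ⟨hπ, hfst, hsnd⟩, rfl⟩
end
end

section
/- Let ρ > 0 and let π₀ be a probability measure on ℝ^d with density e^{−V} with respect to Lebesgue measure, where V : ℝ^d → ℝ is ρ-strongly convex, i.e. x ↦ V(x) − (ρ/2)‖x‖² is convex. Then for every probability measure ν on ℝ^d with D_KL(ν‖π₀) < ∞, the infimum over all couplings π of π₀ and ν of the quadratic transport cost ∫ ‖x − y‖² dπ(x,y) is at most (2/ρ)·D_KL(ν‖π₀). (Talagrand transportation-cost inequality for log-concave reference measures, the precise form of Theorem 4.3 of the paper.) -/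
open MeasureTheory ENNReal
open scoped Classical

noncomputable section

open Set Filter Topology
open scoped NNReal Pointwise

/-- One-dimensional Brunn–Minkowski inequality for compact sets. -/
lemma volume_add_le_of_isCompact {K L : Set ℝ} (hK : IsCompact K) (hL : IsCompact L)
    (hK0 : K.Nonempty) (hL0 : L.Nonempty) :
    volume K + volume L ≤ volume (K + L) := by
  obtain ⟨a, haK, ha⟩ := hK.exists_isGreatest hK0
  obtain ⟨b, hbL, hb⟩ := hL.exists_isLeast hL0
  have h1 : (fun x => x + b) '' K ⊆ K + L := by
    rintro _ ⟨x, hx, rfl⟩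
    exact add_mem_add hx hbL
  have h2 : (fun y => a + y) '' L ⊆ K + L := by
    rintro _ ⟨y, hy, rfl⟩
    exact add_mem_add haK hy
  have hdisj : AEDisjoint volume ((fun x => x + b) '' K) ((fun y => a + y) '' L) := by
    refine measure_mono_null (t := {a + b}) ?_ (by simp)
    rintro _ ⟨⟨x, hx, rfl⟩, ⟨y, hy, hxy⟩⟩
    have := ha hx
    have := hb hy
    simp only [mem_singleton_iff] at *
    linarith
  have hmeas : NullMeasurableSet ((fun y => a + y) '' L) (volume : Measure ℝ) :=
    (hL.image (by fun_prop)).measurableSet.nullMeasurableSet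
  calc volume K + volume L
      = volume ((fun x => x + b) '' K) + volume ((fun y => a + y) '' L) := by
        simp [image_add_left, image_add_right]
    _ = volume ((fun x => x + b) '' K ∪ (fun y => a + y) '' L) :=
        (measure_union₀ hmeas hdisj).symm
    _ ≤ volume (K + L) := measure_mono (union_subset h1 h2)

/-- One-dimensional Brunn–Minkowski inequality. -/
lemma volume_add_le {A B : Set ℝ} (hA : MeasurableSet A) (hB : MeasurableSet B)
    (hA0 : A.Nonempty) (hB0 : B.Nonempty) :
    volume A + volume B ≤ volume (A + B) := by
  obtain ⟨a, ha⟩ := hA0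
  obtain ⟨b, hb⟩ := hB0
  rw [hA.measure_eq_iSup_isCompact, hB.measure_eq_iSup_isCompact]
  simp only [iSup_and', iSup_subtype']
  have : Nonempty {K : Set ℝ // K ⊆ A ∧ IsCompact K} := ⟨⟨∅, by simp⟩⟩
  have : Nonempty {K : Set ℝ // K ⊆ B ∧ IsCompact K} := ⟨⟨∅, by simp⟩⟩
  refine ENNReal.iSup_add_iSup_le fun K L => ?_
  obtain ⟨K, hKA, hK⟩ := K
  obtain ⟨L, hLB, hL⟩ := L
  calc volume K + volume L ≤ volume (insert a K) + volume (insert b L) := by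
        gcongr <;> exact subset_insert _ _
    _ ≤ volume (insert a K + insert b L) :=
        volume_add_le_of_isCompact (hK.insert a) (hL.insert b) ⟨a, by simp⟩ ⟨b, by simp⟩
    _ ≤ volume (A + B) := by
        gcongr
        · exact insert_subset ha hKA
        · exact insert_subset hb hLB

/-- The Prékopa–Leindler inequality on the line, for functions with supremum `1`, in its
arithmetic-mean form. -/
lemma lintegral_add_le_of_iSup_eq_one {t : ℝ} (ht0 : 0 < t) (ht1 : t < 1) {f g h : ℝ → ℝ}
    (hf : Measurable f) (hg : Measurable g) (hh : Measurable h)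
    (hf0 : ∀ x, 0 ≤ f x) (hg0 : ∀ x, 0 ≤ g x) (hh0 : ∀ x, 0 ≤ h x)
    (hf1 : ∀ x, f x ≤ 1) (hg1 : ∀ x, g x ≤ 1)
    (hf1' : ∀ c < 1, ∃ x, c < f x) (hg1' : ∀ c < 1, ∃ x, c < g x)
    (hfgh : ∀ x y, f x ^ (1 - t) * g y ^ t ≤ h ((1 - t) * x + t * y)) :
    ENNReal.ofReal (1 - t) * (∫⁻ x, ENNReal.ofReal (f x))
      + ENNReal.ofReal t * (∫⁻ x, ENNReal.ofReal (g x)) ≤ ∫⁻ x, ENNReal.ofReal (h x) := by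
  rw [lintegral_eq_lintegral_meas_lt volume (ae_of_all _ hf0) hf.aemeasurable,
    lintegral_eq_lintegral_meas_lt volume (ae_of_all _ hg0) hg.aemeasurable,
    lintegral_eq_lintegral_meas_lt volume (ae_of_all _ hh0) hh.aemeasurable,
    ← lintegral_const_mul' _ _ (by simp), ← lintegral_const_mul' _ _ (by simp),
    ← lintegral_add_left]
  swap
  · refine Measurable.const_mul (Antitone.measurable fun a b hab => ?_) _
    exact measure_mono fun x (hx : b < f x) => hab.trans_lt hx
  refine setLIntegral_mono' measurableSet_Ioi fun c hc => ?_
  have hc : 0 < c := hc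
  rcases lt_or_ge c 1 with hc1 | hc1
  · have hA : MeasurableSet {x | c < f x} := measurableSet_lt measurable_const hf
    have hB : MeasurableSet {x | c < g x} := measurableSet_lt measurable_const hg
    have hscale : ∀ r : ℝ, 0 < r → ∀ A : Set ℝ,
        ENNReal.ofReal r * volume A = volume (r • A) := fun r hr A => by
      rw [Measure.addHaar_smul]
      simp [abs_of_pos hr]
    rw [hscale _ (by linarith), hscale _ ht0]
    refine (volume_add_le (hA.const_smul₀ _) (hB.const_smul₀ _) (Set.Nonempty.smul_set (hf1' c hc1))
      (Set.Nonempty.smul_set (hg1' c hc1))).trans (measure_mono ?_)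
    rintro _ ⟨_, ⟨x, hx, rfl⟩, _, ⟨y, hy, rfl⟩, rfl⟩
    have hx : c < f x := hx
    have hy : c < g y := hy
    refine lt_of_lt_of_le ?_ (hfgh x y)
    calc c = c ^ (1 - t) * c ^ t := by rw [← Real.rpow_add hc]; simp
      _ < f x ^ (1 - t) * g y ^ t := by
        have h1 := Real.rpow_lt_rpow hc.le hx (by linarith : 0 < 1 - t)
        have h2 := Real.rpow_lt_rpow hc.le hy ht0
        have := Real.rpow_pos_of_pos hc (1 - t)
        have := Real.rpow_pos_of_pos hc t
        exact mul_lt_mul'' h1 h2 (by positivity) (by positivity)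
  · have h1 : {x | c < f x} = ∅ := by
      ext x; simpa using (hf1 x).trans hc1
    have h2 : {x | c < g x} = ∅ := by
      ext x; simpa using (hg1 x).trans hc1
    simp [h1, h2]

/-- Weighted inequality of arithmetic and geometric means in `ℝ≥0∞`. -/
lemma ENNReal.rpow_mul_rpow_le_add {t : ℝ} (ht0 : 0 < t) (ht1 : t < 1) (a b : ℝ≥0∞) :
    a ^ (1 - t) * b ^ t ≤ ENNReal.ofReal (1 - t) * a + ENNReal.ofReal t * b := by
  have ht1' : 0 < 1 - t := by linarith
  rcases eq_or_ne a ∞ with rfl | ha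
  · rw [ENNReal.mul_top (by simpa using ht1')]
    simp
  rcases eq_or_ne b ∞ with rfl | hb
  · rw [ENNReal.mul_top (a := ENNReal.ofReal t) (by simpa using ht0)]
    simp
  lift a to ℝ≥0 using ha
  lift b to ℝ≥0 using hb
  rw [← ENNReal.coe_rpow_of_nonneg _ ht1'.le, ← ENNReal.coe_rpow_of_nonneg _ ht0.le,
    ENNReal.ofReal, ENNReal.ofReal]
  norm_cast
  have := NNReal.geom_mean_le_arith_mean2_weighted (1 - t).toNNReal t.toNNReal a b
    (by rw [← Real.toNNReal_add ht1'.le ht0.le]; simp)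
  simpa [Real.coe_toNNReal _ ht1'.le, Real.coe_toNNReal _ ht0.le] using this

/-- The Prékopa–Leindler inequality holds on `E`. -/
def PrekopaLeindler (E : Type*) [AddCommGroup E] [Module ℝ E] [MeasureSpace E] : Prop :=
  ∀ ⦃t : ℝ⦄, 0 < t → t < 1 → ∀ ⦃f g h : E → ℝ≥0∞⦄, Measurable f → Measurable g → Measurable h →
    (∀ x y, f x ^ (1 - t) * g y ^ t ≤ h ((1 - t) • x + t • y)) →
    (∫⁻ x, f x) ^ (1 - t) * (∫⁻ x, g x) ^ t ≤ ∫⁻ x, h x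

lemma prekopaLeindler_real_of_bounded {t : ℝ} (ht0 : 0 < t) (ht1 : t < 1) {f g h : ℝ → ℝ≥0∞}
    (hf : Measurable f) (hg : Measurable g) (hh : Measurable h)
    (hfb : ⨆ x, f x ≠ ∞) (hgb : ⨆ x, g x ≠ ∞)
    (hfgh : ∀ x y, f x ^ (1 - t) * g y ^ t ≤ h ((1 - t) • x + t • y)) :
    (∫⁻ x, f x) ^ (1 - t) * (∫⁻ x, g x) ^ t ≤ ∫⁻ x, h x := by
  have ht1' : 0 < 1 - t := by linarith
  rcases eq_or_ne (⨆ x, f x) 0 with hf0 | hf0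
  · have : ∀ x, f x = 0 := by simpa using hf0
    simp [this, ENNReal.zero_rpow_of_pos ht1']
  rcases eq_or_ne (⨆ x, g x) 0 with hg0 | hg0
  · have : ∀ x, g x = 0 := by simpa using hg0
    simp [this, ENNReal.zero_rpow_of_pos ht0]
  set F := ⨆ x, f x with hF
  set G := ⨆ x, g x with hG
  have key : ∀ {u : ℝ → ℝ≥0∞} {U : ℝ≥0∞}, U = ⨆ x, u x → U ≠ 0 → U ≠ ∞ →
      (∀ x, u x / U ≤ 1) ∧ ∀ c < (1 : ℝ), ∃ x, c < (u x / U).toReal := by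
    intro u U hU h0 hT
    have hle : ∀ x, u x / U ≤ 1 := fun x =>
      ENNReal.div_le_of_le_mul (by rw [one_mul, hU]; exact le_iSup u x)
    refine ⟨hle, fun c hc => ?_⟩
    rcases lt_or_ge c 0 with hc0 | hc0
    · exact ⟨0, hc0.trans_le ENNReal.toReal_nonneg⟩
    have : ENNReal.ofReal c * U < ⨆ x, u x := by
      rw [← hU]
      conv_rhs => rw [← one_mul U]
      refine ENNReal.mul_lt_mul_left h0 hT ?_
      simpa using hc
    obtain ⟨x, hx⟩ := lt_iSup_iff.1 this
    refine ⟨x, ?_⟩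
    have h2 : ENNReal.ofReal c < u x / U :=
      (ENNReal.lt_div_iff_mul_lt (Or.inl h0) (Or.inl hT)).2 hx
    rwa [ENNReal.ofReal_lt_iff_lt_toReal hc0 ((hle x).trans_lt one_lt_top).ne] at h2
  obtain ⟨hf1, hf1'⟩ := key hF hf0 hfb
  obtain ⟨hg1, hg1'⟩ := key hG hg0 hgb
  set H := F ^ (1 - t) * G ^ t with hH
  have hH0 : H ≠ 0 := by
    simp [hH, ENNReal.rpow_eq_zero_iff, hf0, hg0, ht0.not_gt, ht1'.not_gt, hfb, hgb]
  have hHT : H ≠ ∞ := ENNReal.mul_ne_top (ENNReal.rpow_ne_top_of_nonneg ht1'.le hfb)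
    (ENNReal.rpow_ne_top_of_nonneg ht0.le hgb)
  have hfin : ∀ {a : ℝ≥0∞}, a ≤ 1 → a ≠ ∞ := fun h => (h.trans_lt one_lt_top).ne
  have main := lintegral_add_le_of_iSup_eq_one ht0 ht1 (f := fun x => (f x / F).toReal)
    (g := fun x => (g x / G).toReal) (h := fun x => (min (h x / H) 1).toReal)
    (by fun_prop) (by fun_prop) (by fun_prop) (fun _ => toReal_nonneg) (fun _ => toReal_nonneg)
    (fun _ => toReal_nonneg) (fun x => toReal_le_of_le_ofReal zero_le_one (by simpa using hf1 x))
    (fun x => toReal_le_of_le_ofReal zero_le_one (by simpa using hg1 x)) hf1' hg1' ?_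
  · simp only [ENNReal.ofReal_toReal (hfin (hf1 _)), ENNReal.ofReal_toReal (hfin (hg1 _)),
      ENNReal.ofReal_toReal (hfin (min_le_right _ _))] at main
    have h1 : (∫⁻ x, f x / F) ^ (1 - t) * (∫⁻ x, g x / G) ^ t ≤ ∫⁻ x, h x / H :=
      (ENNReal.rpow_mul_rpow_le_add ht0 ht1 _ _).trans
        (main.trans (lintegral_mono fun x => min_le_left _ _))
    simp only [div_eq_mul_inv] at h1
    rw [lintegral_mul_const _ hf, lintegral_mul_const _ hg, lintegral_mul_const _ hh,
      ENNReal.mul_rpow_of_nonneg _ _ ht1'.le, ENNReal.mul_rpow_of_nonneg _ _ ht0.le,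
      mul_mul_mul_comm, ENNReal.inv_rpow, ENNReal.inv_rpow,
      ← ENNReal.mul_inv (Or.inr (ENNReal.rpow_ne_top_of_nonneg ht0.le hgb))
        (Or.inl (ENNReal.rpow_ne_top_of_nonneg ht1'.le hfb)), ← hH] at h1
    exact (ENNReal.mul_le_mul_iff_left (ENNReal.inv_ne_zero.2 hHT) (ENNReal.inv_ne_top.2 hH0)).1 h1
  · intro x y
    rw [ENNReal.toReal_rpow, ENNReal.toReal_rpow, ← ENNReal.toReal_mul]
    refine ENNReal.toReal_mono (hfin (min_le_right _ _)) (le_min ?_ ?_)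
    · rw [ENNReal.div_rpow_of_nonneg _ _ ht1'.le, ENNReal.div_rpow_of_nonneg _ _ ht0.le,
        div_eq_mul_inv, div_eq_mul_inv, mul_mul_mul_comm,
        ← ENNReal.mul_inv (Or.inr (ENNReal.rpow_ne_top_of_nonneg ht0.le hgb))
        (Or.inl (ENNReal.rpow_ne_top_of_nonneg ht1'.le hfb)), ← hH, ← div_eq_mul_inv]
      gcongr
      simpa using hfgh x y
    · exact mul_le_one' (ENNReal.rpow_le_one (hf1 x) ht1'.le) (ENNReal.rpow_le_one (hg1 y) ht0.le)

lemma prekopaLeindler_real : PrekopaLeindler ℝ := by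
  intro t ht0 ht1 f g h hf hg hh hfgh
  have ht1' : 0 < 1 - t := by linarith
  rcases eq_or_ne (∫⁻ x, f x) 0 with hf0 | hf0
  · simp [hf0, ENNReal.zero_rpow_of_pos ht1']
  rcases eq_or_ne (∫⁻ x, g x) 0 with hg0 | hg0
  · simp [hg0, ENNReal.zero_rpow_of_pos ht0]
  have htrunc : ∀ {u : ℝ → ℝ≥0∞}, Measurable u →
      Tendsto (fun n : ℕ => ∫⁻ x, min (u x) n) atTop (𝓝 (∫⁻ x, u x)) := by
    intro u hu
    refine lintegral_tendsto_of_tendsto_of_monotone (fun n => by fun_prop)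
      (ae_of_all _ fun x m n hmn => ?_) (ae_of_all _ fun x => ?_)
    · dsimp only
      gcongr
    · have := tendsto_const_nhds (x := u x) (f := (atTop : Filter ℕ)) |>.min
        ENNReal.tendsto_nat_nhds_top
      simpa using this
  have hbdd : ∀ (u : ℝ → ℝ≥0∞) (n : ℕ), ⨆ x, min (u x) (n : ℝ≥0∞) ≠ ∞ := fun u n =>
    ((iSup_le fun x => min_le_right _ _).trans_lt (ENNReal.natCast_lt_top n)).ne
  refine le_of_tendsto (ENNReal.Tendsto.mul ((htrunc hf).ennrpow_const (1 - t)) (Or.inl ?_)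
    ((htrunc hg).ennrpow_const t) (Or.inl ?_)) (Eventually.of_forall fun n => ?_)
  · simp [ENNReal.rpow_eq_zero_iff, hf0, ht1'.not_gt]
  · simp [ENNReal.rpow_eq_zero_iff, hg0, ht0.not_gt]
  · refine prekopaLeindler_real_of_bounded ht0 ht1 (by fun_prop) (by fun_prop) hh (hbdd f n)
      (hbdd g n) fun x y => le_trans ?_ (hfgh x y)
    gcongr <;> exact min_le_left _ _

lemma PrekopaLeindler.prod {E F : Type*} [AddCommGroup E] [Module ℝ E] [MeasureSpace E]
    [AddCommGroup F] [Module ℝ F] [MeasureSpace F] [SFinite (volume : Measure F)]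
    (hE : PrekopaLeindler E) (hF : PrekopaLeindler F) : PrekopaLeindler (E × F) := by
  intro t ht0 ht1 f g h hf hg hh hfgh
  rw [Measure.volume_eq_prod, lintegral_prod _ hf.aemeasurable, lintegral_prod _ hg.aemeasurable,
    lintegral_prod _ hh.aemeasurable]
  refine hE ht0 ht1 hf.lintegral_prod_right' hg.lintegral_prod_right' hh.lintegral_prod_right'
    fun x y => hF ht0 ht1 (by fun_prop) (by fun_prop) (by fun_prop) fun x' y' => ?_
  simpa using hfgh (x, x') (y, y')

lemma PrekopaLeindler.of_linearMap {E F : Type*} [AddCommGroup E] [Module ℝ E] [MeasureSpace E]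
    [AddCommGroup F] [Module ℝ F] [MeasureSpace F] (hE : PrekopaLeindler E) (L : E →ₗ[ℝ] F)
    (hL : MeasurePreserving L) : PrekopaLeindler F := by
  intro t ht0 ht1 f g h hf hg hh hfgh
  rw [← hL.lintegral_comp hf, ← hL.lintegral_comp hg, ← hL.lintegral_comp hh]
  refine hE ht0 ht1 (hf.comp hL.measurable) (hg.comp hL.measurable) (hh.comp hL.measurable)
    fun x y => ?_
  simpa using hfgh (L x) (L y)

lemma prekopaLeindler_pi (d : ℕ) : PrekopaLeindler (Fin d → ℝ) := by
  induction d with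
  | zero =>
    intro t ht0 ht1 f g h hf hg hh hfgh
    simpa [Measure.volume_pi_eq_dirac (0 : Fin 0 → ℝ), lintegral_dirac] using hfgh 0 0
  | succ d ih =>
    refine (prekopaLeindler_real.prod ih).of_linearMap
      (Fin.consLinearEquiv ℝ (fun _ : Fin (d + 1) => ℝ)).toLinearMap ?_
    have : ⇑(Fin.consLinearEquiv ℝ (fun _ : Fin (d + 1) => ℝ)).toLinearMap
        = (MeasurableEquiv.piFinSuccAbove (fun _ : Fin (d + 1) => ℝ) 0).symm := by
      ext x i
      simp [MeasurableEquiv.piFinSuccAbove]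
    rw [this]
    exact (volume_preserving_piFinSuccAbove (fun _ : Fin (d + 1) => ℝ) 0).symm

lemma prekopaLeindler_euclideanSpace (d : ℕ) : PrekopaLeindler (EuclideanSpace ℝ (Fin d)) :=
  (prekopaLeindler_pi d).of_linearMap (WithLp.linearEquiv 2 ℝ (Fin d → ℝ)).symm.toLinearMap
    (PiLp.volume_preserving_toLp (Fin d))

section Entropy

variable {α : Type*} [MeasurableSpace α] {μ ν : Measure α} [IsProbabilityMeasure μ]
  [IsProbabilityMeasure ν]

/-- The Gibbs variational principle: `∫ φ dν ≤ D_KL(ν‖μ) + log ∫ e^φ dμ`. -/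
lemma integral_le_integral_llr_add_log (hνμ : ν ≪ μ) (hllr : Integrable (llr ν μ) ν) {φ : α → ℝ}
    (hφ : Integrable φ ν) (hexp : Integrable (fun x => Real.exp (φ x)) μ) :
    ∫ x, φ x ∂ν ≤ ∫ x, llr ν μ x ∂ν + Real.log (∫ x, Real.exp (φ x) ∂μ) := by
  have : IsProbabilityMeasure (μ.tilted φ) := isProbabilityMeasure_tilted hexp
  have h := InformationTheory.integral_llr_add_sub_measure_univ_nonneg
    (hνμ.trans (absolutelyContinuous_tilted hexp)) (integrable_llr_tilted_right hνμ hφ hllr hexp)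
  rw [integral_llr_tilted_right hνμ hφ hexp hllr] at h
  simp only [probReal_univ] at h
  linarith

/-- Jensen's inequality for the exponential. -/
lemma integral_le_log_integral_exp {φ : α → ℝ} (hφ : Integrable φ μ)
    (hexp : Integrable (fun x => Real.exp (φ x)) μ) :
    ∫ x, φ x ∂μ ≤ Real.log (∫ x, Real.exp (φ x) ∂μ) := by
  have h0 : llr μ μ =ᵐ[μ] fun _ => 0 := llr_self μ
  have hφi : Integrable (llr μ μ) μ := (integrable_congr h0).2 (integrable_const 0)
  simpa [integral_congr_ae h0] using
    integral_le_integral_llr_add_log Measure.AbsolutelyContinuous.rfl hφi hφ hexp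

/-- A function with finite exponential moment under `μ` has finite moment under every measure of
finite entropy relative to `μ`. -/
lemma integrable_of_integrable_exp (hνμ : ν ≪ μ) (hllr : Integrable (llr ν μ) ν) {φ : α → ℝ}
    (hφ : Measurable φ) (hφ0 : ∀ x, 0 ≤ φ x) (hexp : Integrable (fun x => Real.exp (φ x)) μ) :
    Integrable φ ν := by
  set C := ∫ x, llr ν μ x ∂ν + Real.log (∫ x, Real.exp (φ x) ∂μ) with hC
  have hbound : ∀ n : ℕ, ∫⁻ x, ENNReal.ofReal (min (φ x) n) ∂ν ≤ ENNReal.ofReal C := by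
    intro n
    have hmeas : Measurable fun x => min (φ x) n := by fun_prop
    have hnn : ∀ x, 0 ≤ min (φ x) n := fun x => le_min (hφ0 x) (Nat.cast_nonneg n)
    have hφi : Integrable (fun x => min (φ x) n) ν :=
      Integrable.of_bound hmeas.aestronglyMeasurable n (ae_of_all _ fun x => by
        rw [Real.norm_of_nonneg (hnn x)]
        exact min_le_right _ _)
    have hle : ∀ x, Real.exp (min (φ x) n) ≤ Real.exp (φ x) := fun x =>
      Real.exp_le_exp.2 (min_le_left _ _)
    have hexp' : Integrable (fun x => Real.exp (min (φ x) n)) μ :=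
      hexp.mono' (by fun_prop) (ae_of_all _ fun x => by
        rw [Real.norm_of_nonneg (Real.exp_pos _).le]
        exact hle x)
    rw [← ofReal_integral_eq_lintegral_ofReal hφi (ae_of_all _ hnn)]
    refine ENNReal.ofReal_le_ofReal
      ((integral_le_integral_llr_add_log hνμ hllr hφi hexp').trans ?_)
    have hpos := integral_exp_pos hexp'
    have := Real.log_le_log hpos (integral_mono hexp' hexp hle)
    linarith
  have htend : Tendsto (fun n : ℕ => ∫⁻ x, ENNReal.ofReal (min (φ x) n) ∂ν) atTop
      (𝓝 (∫⁻ x, ENNReal.ofReal (φ x) ∂ν)) := by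
    refine lintegral_tendsto_of_tendsto_of_monotone (fun n => by fun_prop)
      (ae_of_all _ fun x m n hmn => ?_) (ae_of_all _ fun x => ?_)
    · dsimp only
      gcongr
    · refine tendsto_const_nhds.congr' ?_
      obtain ⟨N, hN⟩ := exists_nat_ge (φ x)
      filter_upwards [eventually_ge_atTop N] with n hn
      rw [min_eq_left (hN.trans (by exact_mod_cast hn))]
  refine ⟨hφ.aestronglyMeasurable, ?_⟩
  rw [hasFiniteIntegral_iff_ofReal (ae_of_all _ hφ0)]
  exact (le_of_tendsto' htend hbound).trans_lt ENNReal.ofReal_lt_top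

end Entropy

section LogConcave

variable {d : ℕ} {ρ : ℝ} {V : EuclideanSpace ℝ (Fin d) → ℝ}
  {π₀ ν : Measure (EuclideanSpace ℝ (Fin d))}

/-- A form of Maurey's property `(τ)` for strongly log-concave measures. -/
lemma lintegral_exp_rpow_mul_le_one
    (hV : ConvexOn ℝ Set.univ fun x => V x - ρ / 2 * ‖x‖ ^ 2)
    (hπ₀ : π₀ = volume.withDensity fun x => ENNReal.ofReal (Real.exp (-V x)))
    [IsProbabilityMeasure π₀] (hρ : 0 < ρ) {t : ℝ} (ht0 : 0 < t) (ht1 : t < 1)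
    {u w : EuclideanSpace ℝ (Fin d) → ℝ} (hu : Measurable u) (hw : Measurable w)
    (huw : ∀ x y, u x + w y ≤ ‖x - y‖ ^ 2) :
    (∫⁻ x, ENNReal.ofReal (Real.exp (ρ * t / 2 * u x)) ∂π₀) ^ (1 - t)
      * (∫⁻ x, ENNReal.ofReal (Real.exp (ρ * (1 - t) / 2 * w x)) ∂π₀) ^ t ≤ 1 := by
  have hVm : Measurable V := by
    have h1 : Continuous fun x => V x - ρ / 2 * ‖x‖ ^ 2 :=
      continuousOn_univ.1 (hV.continuousOn isOpen_univ)
    have h2 : Continuous fun x => V x - ρ / 2 * ‖x‖ ^ 2 + ρ / 2 * ‖x‖ ^ 2 :=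
      h1.add (by fun_prop)
    simpa using h2.measurable
  have hdens : Measurable fun x => ENNReal.ofReal (Real.exp (-V x)) := by fun_prop
  have hone : ∫⁻ x, ENNReal.ofReal (Real.exp (-V x)) = 1 := by
    have := measure_univ (μ := π₀)
    rwa [hπ₀, withDensity_apply _ MeasurableSet.univ, setLIntegral_univ] at this
  have hφi : ∀ φ : EuclideanSpace ℝ (Fin d) → ℝ, Measurable φ →
      ∫⁻ x, ENNReal.ofReal (Real.exp (φ x)) ∂π₀
        = ∫⁻ x, ENNReal.ofReal (Real.exp (-V x + φ x)) := by
    intro φ hφ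
    rw [hπ₀, lintegral_withDensity_eq_lintegral_mul _ hdens (by fun_prop)]
    refine lintegral_congr fun x => ?_
    rw [Pi.mul_apply, ← ENNReal.ofReal_mul (Real.exp_pos _).le, ← Real.exp_add]
  rw [hφi _ (by fun_prop), hφi _ (by fun_prop), ← hone]
  refine prekopaLeindler_euclideanSpace d ht0 ht1 (by fun_prop) (by fun_prop) hdens fun x y => ?_
  rw [ENNReal.ofReal_rpow_of_pos (Real.exp_pos _), ENNReal.ofReal_rpow_of_pos (Real.exp_pos _),
    ← ENNReal.ofReal_mul (by positivity), ← Real.exp_mul, ← Real.exp_mul, ← Real.exp_add]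
  refine ENNReal.ofReal_le_ofReal (Real.exp_le_exp.2 ?_)
  have hsc := (strongConvexOn_iff_convex.2 hV).2 (mem_univ x) (mem_univ y)
    (sub_nonneg.2 ht1.le) ht0.le (by ring)
  simp only [smul_eq_mul] at hsc
  have hpos : 0 ≤ ρ / 2 * t * (1 - t) := by
    have : 0 < 1 - t := by linarith
    positivity
  have := mul_le_mul_of_nonneg_left (huw x y) hpos
  nlinarith

/-- Dual form of the transportation inequality, for bounded potentials. -/
lemma integral_add_integral_le_of_add_le
    (hV : ConvexOn ℝ Set.univ fun x => V x - ρ / 2 * ‖x‖ ^ 2)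
    (hπ₀ : π₀ = volume.withDensity fun x => ENNReal.ofReal (Real.exp (-V x)))
    [IsProbabilityMeasure π₀] [IsProbabilityMeasure ν] (hρ : 0 < ρ)
    (hνπ : ν ≪ π₀) (hllr : Integrable (llr ν π₀) ν)
    {u w : EuclideanSpace ℝ (Fin d) → ℝ} (hu : Measurable u) (hw : Measurable w) {C : ℝ}
    (huC : ∀ x, |u x| ≤ C) (hwC : ∀ x, |w x| ≤ C) (huw : ∀ x y, u x + w y ≤ ‖x - y‖ ^ 2) :
    ∫ x, u x ∂π₀ + ∫ x, w x ∂ν ≤ 2 / ρ * ∫ x, llr ν π₀ x ∂ν := by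
  have hφi : ∀ {φ : EuclideanSpace ℝ (Fin d) → ℝ} (m : Measure (EuclideanSpace ℝ (Fin d)))
      [IsProbabilityMeasure m], Measurable φ → (∀ x, |φ x| ≤ C) → Integrable φ m :=
    fun m _ hφ hC => Integrable.of_bound hφ.aestronglyMeasurable C (ae_of_all _ hC)
  have hexp : ∀ {φ : EuclideanSpace ℝ (Fin d) → ℝ} (a : ℝ), Measurable φ → (∀ x, |φ x| ≤ C) →
      Integrable (fun x => Real.exp (a * φ x)) π₀ := fun {φ} a hφ hC =>
    Integrable.of_bound (by fun_prop) (Real.exp (|a| * C)) (ae_of_all _ fun x => by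
      rw [Real.norm_of_nonneg (Real.exp_pos _).le, Real.exp_le_exp]
      calc a * φ x ≤ |a * φ x| := le_abs_self _
        _ = |a| * |φ x| := abs_mul _ _
        _ ≤ |a| * C := by gcongr; exact hC x)
  have key : ∀ t : ℝ, 0 < t → t < 1 →
      (1 - t) * (∫ x, u x ∂π₀ + ∫ x, w x ∂ν) ≤ 2 / ρ * ∫ x, llr ν π₀ x ∂ν := by
    intro t ht0 ht1
    have ht1' : 0 < 1 - t := by linarith
    have h := lintegral_exp_rpow_mul_le_one hV hπ₀ hρ ht0 ht1 hu hw huw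
    have hA := hexp (ρ * t / 2) hu huC
    have hB := hexp (ρ * (1 - t) / 2) hw hwC
    have hA0 := integral_exp_pos hA
    have hB0 := integral_exp_pos hB
    rw [← ofReal_integral_eq_lintegral_ofReal hA (ae_of_all _ fun x => (Real.exp_pos _).le),
      ← ofReal_integral_eq_lintegral_ofReal hB (ae_of_all _ fun x => (Real.exp_pos _).le),
      ENNReal.ofReal_rpow_of_pos hA0, ENNReal.ofReal_rpow_of_pos hB0,
      ← ENNReal.ofReal_mul (by positivity), ← ENNReal.ofReal_one,
      ENNReal.ofReal_le_ofReal_iff zero_le_one] at h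
    have hlog := Real.log_le_log (by positivity) h
    rw [Real.log_mul (by positivity) (by positivity), Real.log_rpow hA0, Real.log_rpow hB0,
      Real.log_one] at hlog
    have h1 := integral_le_log_integral_exp ((hφi π₀ hu huC).const_mul (ρ * t / 2)) hA
    have h2 := integral_le_integral_llr_add_log hνπ hllr
      ((hφi ν hw hwC).const_mul (ρ * (1 - t) / 2)) hB
    rw [integral_const_mul] at h1 h2
    have h3 := mul_le_mul_of_nonneg_left h1 ht1'.le
    have h4 := mul_le_mul_of_nonneg_left h2 ht0.le
    have h5 : t * (ρ / 2 * ((1 - t) * (∫ x, u x ∂π₀ + ∫ x, w x ∂ν)))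
        ≤ t * ∫ x, llr ν π₀ x ∂ν := by linarith
    have h6 := le_of_mul_le_mul_left h5 ht0
    rw [div_mul_eq_mul_div, le_div_iff₀ hρ]
    linarith
  have hlim : Tendsto (fun t : ℝ => (1 - t) * (∫ x, u x ∂π₀ + ∫ x, w x ∂ν)) (𝓝[>] 0)
      (𝓝 ((1 - 0) * (∫ x, u x ∂π₀ + ∫ x, w x ∂ν))) :=
    ((by fun_prop : Continuous fun t : ℝ => (1 - t) * (∫ x, u x ∂π₀ + ∫ x, w x ∂ν)).tendsto
      0).mono_left nhdsWithin_le_nhds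
  rw [sub_zero, one_mul] at hlim
  refine le_of_tendsto hlim ?_
  filter_upwards [Ioo_mem_nhdsGT zero_lt_one] with t ht using key t ht.1 ht.2

lemma integrable_exp_sq_norm
    (hV : ConvexOn ℝ Set.univ fun x => V x - ρ / 2 * ‖x‖ ^ 2)
    (hπ₀ : π₀ = volume.withDensity fun x => ENNReal.ofReal (Real.exp (-V x)))
    [IsProbabilityMeasure π₀] (hρ : 0 < ρ) :
    Integrable (fun x => Real.exp (ρ / 8 * ‖x‖ ^ 2)) π₀ := by
  have h := lintegral_exp_rpow_mul_le_one hV hπ₀ hρ (t := 1 / 2) (by norm_num) (by norm_num)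
    (u := fun x => -‖x‖ ^ 2) (w := fun x => ‖x‖ ^ 2 / 2) (by fun_prop) (by fun_prop)
    (fun x y => by
      have h1 : ‖y‖ ≤ ‖x‖ + ‖x - y‖ := by
        rw [norm_sub_rev]
        exact norm_le_norm_add_norm_sub' y x
      nlinarith [sq_nonneg (‖x‖ - ‖x - y‖), norm_nonneg y])
  refine ⟨by fun_prop, ?_⟩
  rw [hasFiniteIntegral_iff_ofReal (ae_of_all _ fun x => (Real.exp_pos _).le), lt_top_iff_ne_top]
  intro htop
  have hfun : (fun x : EuclideanSpace ℝ (Fin d) =>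
      ENNReal.ofReal (Real.exp (ρ * (1 - 1 / 2) / 2 * (‖x‖ ^ 2 / 2))))
      = fun x => ENNReal.ofReal (Real.exp (ρ / 8 * ‖x‖ ^ 2)) := by
    ext x
    ring_nf
  rw [hfun, htop, ENNReal.top_rpow_of_pos (by norm_num), ENNReal.mul_top] at h
  · simp at h
  · have : ∫⁻ x, ENNReal.ofReal (Real.exp (ρ * (1 / 2) / 2 * -‖x‖ ^ 2)) ∂π₀ ≠ 0 := by
      rw [Ne, lintegral_eq_zero_iff (by fun_prop)]
      intro h0
      obtain ⟨x, hx⟩ := h0.exists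
      simp only [Pi.zero_apply, ENNReal.ofReal_eq_zero] at hx
      exact hx.not_gt (Real.exp_pos _)
    simp only [Ne, ENNReal.rpow_eq_zero_iff, not_or, not_and]
    exact ⟨fun h => (this h).elim, fun _ => by norm_num⟩

end LogConcave

/-- Kantorovich duality for finitely supported measures. -/
lemma exists_plan_of_forall_potential {ι : Type*} [Fintype ι] (c : ι → ι → ℝ) {m n : ι → ℝ}
    (hm : m ∈ stdSimplex ℝ ι) (hn : n ∈ stdSimplex ℝ ι) (v : ℝ)
    (h : ∀ a b : ι → ℝ, (∀ i j, a i + b j ≤ c i j) → ∑ i, m i * a i + ∑ j, n j * b j ≤ v) :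
    ∃ p : ι → ι → ℝ, (∀ i j, 0 ≤ p i j) ∧ (∀ i, ∑ j, p i j = m i) ∧ (∀ j, ∑ i, p i j = n j) ∧
      ∑ i, ∑ j, p i j * c i j ≤ v := by
  let L : (ι × ι → ℝ) →ₗ[ℝ] (ι → ℝ) × (ι → ℝ) × ℝ :=
    { toFun := fun p => (fun i => ∑ j, p (i, j), fun j => ∑ i, p (i, j),
        ∑ i, ∑ j, p (i, j) * c i j)
      map_add' := fun p p' => by
        ext <;> simp [Finset.sum_add_distrib, add_mul]
      map_smul' := fun r p => by
        ext <;> simp [Finset.mul_sum, mul_assoc] }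
  by_contra hcon
  have hdisj : Disjoint (L '' stdSimplex ℝ (ι × ι))
      (({m} : Set (ι → ℝ)) ×ˢ ({n} : Set (ι → ℝ)) ×ˢ Iic v) := by
    rw [Set.disjoint_left]
    rintro _ ⟨p, hp, rfl⟩ ⟨h1, h2, h3⟩
    refine hcon ⟨fun i j => p (i, j), fun i j => hp.1 _, fun i => congrFun h1 i,
      fun j => congrFun h2 j, h3⟩
  obtain ⟨f, r, s, hfr, hrs, hsf⟩ := geometric_hahn_banach_compact_closed
    ((convex_stdSimplex ℝ (ι × ι)).linear_image L)
    ((isCompact_stdSimplex ℝ (ι × ι)).image L.continuous_of_finiteDimensional)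
    ((convex_singleton m).prod ((convex_singleton n).prod (convex_Iic v)))
    (isClosed_singleton.prod (isClosed_singleton.prod isClosed_Iic)) hdisj
  set a : ι → ℝ := fun i => f (Pi.single i 1, 0, 0) with ha
  set b : ι → ℝ := fun j => f (0, Pi.single j 1, 0) with hb
  set l : ℝ := f (0, 0, 1) with hl
  have hf : ∀ x y z, f (x, y, z) = ∑ i, x i * a i + ∑ j, y j * b j + z * l := by
    intro x y z
    have h1 : f (x, 0, 0) = ∑ i, x i * a i := by
      let g := f.toLinearMap ∘ₗ LinearMap.inl ℝ (ι → ℝ) ((ι → ℝ) × ℝ)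
      change g x = ∑ i, x i • g (Pi.single i 1)
      simp only [← map_smul, ← map_sum, ← pi_eq_sum_univ' x]
    have h2 : f (0, y, 0) = ∑ j, y j * b j := by
      let g := f.toLinearMap ∘ₗ LinearMap.inr ℝ (ι → ℝ) ((ι → ℝ) × ℝ) ∘ₗ
        LinearMap.inl ℝ (ι → ℝ) ℝ
      change g y = ∑ j, y j • g (Pi.single j 1)
      simp only [← map_smul, ← map_sum, ← pi_eq_sum_univ' y]
    have h3 : f (0, 0, z) = z * l := by
      rw [hl, ← smul_eq_mul, ← map_smul]
      simp
    rw [← h1, ← h2, ← h3, ← map_add, ← map_add]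
    simp
  have hD : ∀ z ≤ v, s < ∑ i, m i * a i + ∑ j, n j * b j + z * l := fun z hz => by
    rw [← hf]
    exact hsf _ ⟨rfl, rfl, hz⟩
  have hC : ∀ i j, a i + b j + c i j * l < r := by
    intro i j
    have := hfr _ ⟨_, single_mem_stdSimplex ℝ (i, j), rfl⟩
    rw [show L (Pi.single (i, j) 1) = (Pi.single i 1, Pi.single j 1, c i j) by
      refine Prod.ext ?_ (Prod.ext ?_ ?_)
      · ext k
        by_cases hk : k = i
        · simpa [L, Pi.single_apply, hk] using Finset.card_eq_one.2 ⟨j, by ext; simp⟩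
        · simp [L, Pi.single_apply, hk]
      · ext k
        by_cases hk : k = j
        · simpa [L, Pi.single_apply, hk] using Finset.card_eq_one.2 ⟨i, by ext; simp⟩
        · simp [L, Pi.single_apply, hk]
      · simp [L, Pi.single_apply, Prod.ext_iff, ite_and], hf] at this
    simpa [Pi.single_apply] using this
  have hprod : ∑ i, m i * a i + ∑ j, n j * b j + (∑ i, ∑ j, m i * n j * c i j) * l < r := by
    have hmem : (fun k : ι × ι => m k.1 * n k.2) ∈ stdSimplex ℝ (ι × ι) := by
      refine ⟨fun k => mul_nonneg (hm.1 _) (hn.1 _), ?_⟩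
      rw [Fintype.sum_prod_type]
      simp [← Finset.mul_sum, hn.2, hm.2]
    have := hfr _ ⟨_, hmem, rfl⟩
    rwa [show L (fun k : ι × ι => m k.1 * n k.2) = (m, n, ∑ i, ∑ j, m i * n j * c i j) by
      refine Prod.ext ?_ (Prod.ext ?_ rfl)
      · ext k
        simp [L, ← Finset.mul_sum, hn.2]
      · ext k
        simp [L, ← Finset.sum_mul, hm.2], hf] at this
  have hl0 : l < 0 := by
    set M := ∑ i, ∑ j, m i * n j * c i j
    have h1 := hD (min v M - 1) (by linarith [min_le_left v M])
    have h2 := min_le_right v M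
    by_contra! hl0
    nlinarith
  have hl' : 0 < -l := by linarith
  have := h (fun i => (a i - r) / (-l)) (fun j => b j / (-l)) (fun i j => by
    rw [← add_div, div_le_iff₀ hl']
    linarith [hC i j])
  have hsum : ∑ i, m i * ((a i - r) / (-l)) + ∑ j, n j * (b j / (-l))
      = (∑ i, m i * a i + ∑ j, n j * b j - r) / (-l) := by
    simp only [← mul_div_assoc, ← Finset.sum_div, mul_sub, Finset.sum_sub_distrib,
      ← Finset.sum_mul, hm.2, one_mul]
    ring
  rw [hsum, div_le_iff₀ hl'] at this
  linarith [hD v le_rfl]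

/-- A plan between the images of `μ` and `ν` under a finite partition lifts to a coupling. -/
lemma exists_isCoupling_of_plan {d : ℕ} {μ ν : Measure (EuclideanSpace ℝ (Fin d))}
    [IsProbabilityMeasure μ] [IsProbabilityMeasure ν] {ι : Type*} [Fintype ι] [MeasurableSpace ι]
    [MeasurableSingletonClass ι] {q : EuclideanSpace ℝ (Fin d) → ι} (hq : Measurable q)
    {p : ι → ι → ℝ} (hp : ∀ i j, 0 ≤ p i j) (hp1 : ∀ i, ∑ j, p i j = μ.real (q ⁻¹' {i}))
    (hp2 : ∀ j, ∑ i, p i j = ν.real (q ⁻¹' {j})) :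
    ∃ π, IsCoupling π μ ν ∧
      ∀ i j, π ((q ⁻¹' {i}) ×ˢ (q ⁻¹' {j})) = ENNReal.ofReal (p i j) := by
  have hA : ∀ i, MeasurableSet (q ⁻¹' {i}) := fun i => hq (measurableSet_singleton i)
  set μ' : ι → Measure (EuclideanSpace ℝ (Fin d)) :=
    fun i => ProbabilityTheory.cond μ (q ⁻¹' {i}) with hμ'
  set ν' : ι → Measure (EuclideanSpace ℝ (Fin d)) :=
    fun j => ProbabilityTheory.cond ν (q ⁻¹' {j}) with hν'
  have h1 : ∀ i j, p i j ≠ 0 → μ (q ⁻¹' {i}) ≠ 0 := by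
    intro i j hij h0
    have := (Finset.sum_eq_zero_iff_of_nonneg fun j _ => hp i j).1
      ((hp1 i).trans (by simp [measureReal_def, h0]))
    exact hij (this j (Finset.mem_univ j))
  have h2 : ∀ i j, p i j ≠ 0 → ν (q ⁻¹' {j}) ≠ 0 := by
    intro i j hij h0
    have := (Finset.sum_eq_zero_iff_of_nonneg fun i _ => hp i j).1
      ((hp2 j).trans (by simp [measureReal_def, h0]))
    exact hij (this i (Finset.mem_univ i))
  have h1' : ∀ i j, ENNReal.ofReal (p i j) * μ' i univ = ENNReal.ofReal (p i j) := by
    intro i j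
    by_cases hij : p i j = 0
    · simp [hij]
    · have := ProbabilityTheory.cond_isProbabilityMeasure (h1 i j hij)
      simp [hμ']
  have h2' : ∀ i j, ENNReal.ofReal (p i j) * ν' j univ = ENNReal.ofReal (p i j) := by
    intro i j
    by_cases hij : p i j = 0
    · simp [hij]
    · have := ProbabilityTheory.cond_isProbabilityMeasure (h2 i j hij)
      simp [hν']
  have hs1 : ∀ i, ∑ j, ENNReal.ofReal (p i j) = μ (q ⁻¹' {i}) := fun i => by
    rw [← ENNReal.ofReal_sum_of_nonneg fun j _ => hp i j, hp1, ofReal_measureReal]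
  have hs2 : ∀ j, ∑ i, ENNReal.ofReal (p i j) = ν (q ⁻¹' {j}) := fun j => by
    rw [← ENNReal.ofReal_sum_of_nonneg fun i _ => hp i j, hp2, ofReal_measureReal]
  set π := ∑ i, ∑ j, ENNReal.ofReal (p i j) • (μ' i).prod (ν' j) with hπ
  have hfst : π.map Prod.fst = μ := by
    rw [hπ, ← Measure.mapₗ_apply_of_measurable measurable_fst]
    simp only [map_sum, map_smul]
    simp only [Measure.mapₗ_apply_of_measurable measurable_fst, Measure.map_fst_prod, smul_smul,
      h2', ← Finset.sum_smul, hs1]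
    exact ProbabilityTheory.sum_meas_smul_cond_fiber hq μ
  have hsnd : π.map Prod.snd = ν := by
    rw [hπ, Finset.sum_comm, ← Measure.mapₗ_apply_of_measurable measurable_snd]
    simp only [map_sum, map_smul]
    simp only [Measure.mapₗ_apply_of_measurable measurable_snd, Measure.map_snd_prod, smul_smul,
      h1', ← Finset.sum_smul, hs2]
    exact ProbabilityTheory.sum_meas_smul_cond_fiber hq ν
  refine ⟨π, ⟨⟨?_⟩, hfst, hsnd⟩, fun i j => ?_⟩
  · rw [← measure_univ (μ := μ), ← hfst, Measure.map_apply measurable_fst MeasurableSet.univ,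
      preimage_univ]
  · have hz : ∀ (m : Measure (EuclideanSpace ℝ (Fin d))) {k l : ι}, k ≠ l →
        ProbabilityTheory.cond m (q ⁻¹' {k}) (q ⁻¹' {l}) = 0 := fun m k l hkl => by
      rw [ProbabilityTheory.cond_apply (hA k), ← preimage_inter]
      simp [hkl]
    have hself : ∀ (m : Measure (EuclideanSpace ℝ (Fin d))) (k : ι),
        ProbabilityTheory.cond m (q ⁻¹' {k}) (q ⁻¹' {k})
          = ProbabilityTheory.cond m (q ⁻¹' {k}) univ := fun m k => by
      rw [ProbabilityTheory.cond_apply (hA k), ProbabilityTheory.cond_apply (hA k)]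
      simp
    simp only [hπ, Measure.coe_finsetSum, Finset.sum_apply, Measure.smul_apply, smul_eq_mul,
      Measure.prod_prod]
    rw [Finset.sum_eq_single i, Finset.sum_eq_single j]
    · simp only [hμ', hν', hself]
      rw [← mul_assoc, h1', h2']
    · intro l _ hl
      simp [hν', hz ν hl]
    · simp
    · intro k _ hk
      simp [hμ', hz μ hk]
    · simp

/-- A finite measurable partition whose cells meeting the ball of radius `R` are contained in it
and have diameter at most `δ`. -/
lemma exists_finite_partition.{u} {E : Type u} [NormedAddCommGroup E] [ProperSpace E]
    [MeasurableSpace E] [BorelSpace E] (R : ℝ) {δ : ℝ} (hδ : 0 < δ) :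
    ∃ (ι : Type u) (_ : Fintype ι) (_ : MeasurableSpace ι) (_ : MeasurableSingletonClass ι)
      (q : E → ι), Measurable q ∧ ∀ x y, ‖x‖ ≤ R → q x = q y → ‖y‖ ≤ R ∧ ‖x - y‖ ≤ δ := by
  obtain ⟨t, -, ht, hcov⟩ := (isCompact_closedBall (0 : E) R).finite_cover_balls (half_pos hδ)
  have := ht.fintype
  refine ⟨t → Prop, inferInstance, inferInstance, inferInstance,
    fun x z => ‖x‖ ≤ R ∧ dist x z < δ / 2, ?_, fun x y hx hxy => ?_⟩
  · refine measurable_pi_lambda _ fun z => measurableSet_setOfPred.1 ?_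
    exact (measurableSet_le measurable_norm measurable_const).inter Metric.isOpen_ball.measurableSet
  · obtain ⟨z, hz, hxz⟩ := mem_iUnion₂.1 (hcov (mem_closedBall_zero_iff.2 hx))
    have hz' : (‖x‖ ≤ R ∧ dist x z < δ / 2) = (‖y‖ ≤ R ∧ dist y z < δ / 2) :=
      congrFun hxy ⟨z, hz⟩
    have hyz := hz'.mp ⟨hx, hxz⟩
    refine ⟨hyz.1, ?_⟩
    rw [← dist_eq_norm]
    have h1 : dist x z < δ / 2 := hxz
    have h2 : dist y z < δ / 2 := hyz.2
    linarith [dist_triangle_right x y z]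

/-- The part of `4‖x‖²` lying outside the ball of radius `R`. -/
def sqNormTail {E : Type*} [NormedAddCommGroup E] (R : ℝ) (x : E) : ℝ≥0∞ :=
  {x : E | R < ‖x‖}.indicator (fun x => ENNReal.ofReal (4 * ‖x‖ ^ 2)) x

lemma ofReal_sq_norm_sub_le_sqNormTail {E : Type*} [NormedAddCommGroup E] {R : ℝ} {x y : E}
    (h : R < ‖x‖ ∨ R < ‖y‖) :
    ENNReal.ofReal (‖x - y‖ ^ 2) ≤ sqNormTail R x + sqNormTail R y := by
  have hxy := norm_sub_le x y
  have h0 := norm_nonneg (x - y)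
  have hx0 := norm_nonneg x
  have hy0 := norm_nonneg y
  rcases le_total ‖x‖ ‖y‖ with hle | hle
  · have hy : R < ‖y‖ := h.elim (fun h => h.trans_le hle) id
    refine le_trans ?_ le_add_self
    simp only [sqNormTail, indicator, mem_ofPred_eq, hy, if_true]
    exact ENNReal.ofReal_le_ofReal (by nlinarith)
  · have hx : R < ‖x‖ := h.elim id (fun h => h.trans_le hle)
    refine le_trans ?_ le_self_add
    simp only [sqNormTail, indicator, mem_ofPred_eq, hx, if_true]
    exact ENNReal.ofReal_le_ofReal (by nlinarith)

section Tail

variable {E : Type*} [NormedAddCommGroup E] [MeasurableSpace E] [BorelSpace E]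

lemma measurable_sqNormTail (R : ℝ) : Measurable (sqNormTail R : E → ℝ≥0∞) :=
  Measurable.indicator (by fun_prop) (measurableSet_lt measurable_const measurable_norm)

lemma tendsto_lintegral_sqNormTail {μ : Measure E} (h : Integrable (fun x => ‖x‖ ^ 2) μ) :
    Tendsto (fun n : ℕ => ∫⁻ x, sqNormTail n x ∂μ) atTop (𝓝 0) := by
  have h4 : ∫⁻ x, ENNReal.ofReal (4 * ‖x‖ ^ 2) ∂μ ≠ ∞ :=
    ((hasFiniteIntegral_iff_ofReal (ae_of_all _ fun x => by positivity)).1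
      (h.const_mul 4).2).ne
  rw [← lintegral_zero (μ := μ)]
  refine tendsto_lintegral_of_dominated_convergence _ (fun n => measurable_sqNormTail _)
    (fun n => ae_of_all _ fun x => indicator_le_self' (fun _ _ => zero_le) x) h4
    (ae_of_all _ fun x => tendsto_const_nhds.congr' ?_)
  obtain ⟨N, hN⟩ := exists_nat_ge ‖x‖
  filter_upwards [eventually_ge_atTop N] with n hn
  have : ¬ (n : ℝ) < ‖x‖ := not_lt.2 (hN.trans (by exact_mod_cast hn))
  simp [sqNormTail, this]

end Tail

/-- If every pair of admissible bounded potentials has value at most `v`, there are couplings of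
cost at most `v` up to a small error and the tails of the two measures. -/
lemma exists_isCoupling_transportCost_le {d : ℕ} {μ ν : Measure (EuclideanSpace ℝ (Fin d))}
    [IsProbabilityMeasure μ] [IsProbabilityMeasure ν] {v : ℝ}
    (hdual : ∀ (u w : EuclideanSpace ℝ (Fin d) → ℝ) (C : ℝ), Measurable u → Measurable w →
      (∀ x, |u x| ≤ C) → (∀ x, |w x| ≤ C) → (∀ x y, u x + w y ≤ ‖x - y‖ ^ 2) →
      ∫ x, u x ∂μ + ∫ x, w x ∂ν ≤ v) {R ε : ℝ} (hR : 0 ≤ R) (hε : 0 < ε) :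
    ∃ π, IsCoupling π μ ν ∧ transportCost π ≤ ENNReal.ofReal v + ENNReal.ofReal ε
      + ∫⁻ x, sqNormTail R x ∂μ + ∫⁻ x, sqNormTail R x ∂ν := by
  obtain ⟨δ, hδ, hδε⟩ : ∃ δ > 0, 8 * R * δ + 4 * δ ^ 2 ≤ ε := by
    refine ⟨min 1 (ε / (8 * R + 4)), by positivity, ?_⟩
    set δ := min 1 (ε / (8 * R + 4))
    have h0 : 0 < δ := by positivity
    have h1 : δ ≤ 1 := min_le_left _ _
    have h2 : δ * (8 * R + 4) ≤ ε := by
      rw [← le_div_iff₀ (by positivity)]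
      exact min_le_right _ _
    nlinarith
  obtain ⟨ι, _, _, _, q, hq, hcell⟩ :=
    exists_finite_partition (E := EuclideanSpace ℝ (Fin d)) R hδ
  set S : ι → ι → Set ℝ := fun i j => {r | ∃ x y, q x = i ∧ q y = j ∧ r = ‖x - y‖ ^ 2}
  set c : ι → ι → ℝ := fun i j => sInf (S i j)
  have hc0 : ∀ i j, 0 ≤ c i j := fun i j => Real.sInf_nonneg (by
    rintro _ ⟨x, y, -, -, rfl⟩
    positivity)
  have hcle : ∀ x y, c (q x) (q y) ≤ ‖x - y‖ ^ 2 := fun x y =>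
    csInf_le ⟨0, by rintro _ ⟨x, y, -, -, rfl⟩; positivity⟩ ⟨x, y, rfl, rfl, rfl⟩
  have hlec : ∀ x y, ‖x‖ ≤ R → ‖y‖ ≤ R → ‖x - y‖ ^ 2 ≤ c (q x) (q y) + ε := by
    intro x y hx hy
    rw [← sub_le_iff_le_add]
    refine le_csInf ⟨_, x, y, rfl, rfl, rfl⟩ ?_
    rintro _ ⟨x', y', hx', hy', rfl⟩
    obtain ⟨hx'R, hxx'⟩ := hcell x x' hx hx'.symm
    obtain ⟨hy'R, hyy'⟩ := hcell y y' hy hy'.symm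
    have h1 : ‖x - y‖ ≤ ‖x' - y'‖ + 2 * δ := by
      calc ‖x - y‖ = ‖(x' - y') + (x - x') - (y - y')‖ := by congr 1; abel
        _ ≤ ‖x' - y'‖ + ‖x - x'‖ + ‖y - y'‖ :=
          (norm_sub_le _ _).trans (by gcongr; exact norm_add_le _ _)
        _ ≤ ‖x' - y'‖ + 2 * δ := by linarith
    have h2 : ‖x' - y'‖ ≤ 2 * R := (norm_sub_le _ _).trans (by linarith)
    have h3 := norm_nonneg (x - y)
    nlinarith
  have hsimplex : ∀ (m : Measure (EuclideanSpace ℝ (Fin d))) [IsProbabilityMeasure m],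
      (fun i => m.real (q ⁻¹' {i})) ∈ stdSimplex ℝ ι := by
    intro m _
    refine ⟨fun i => measureReal_nonneg, ?_⟩
    have := Measure.isProbabilityMeasure_map (μ := m) hq.aemeasurable
    simp_rw [← map_measureReal_apply hq (measurableSet_singleton _)]
    simp
  have hintegral : ∀ (m : Measure (EuclideanSpace ℝ (Fin d))) [IsProbabilityMeasure m] (a : ι → ℝ),
      ∫ x, a (q x) ∂m = ∑ i, m.real (q ⁻¹' {i}) * a i := by
    intro m _ a
    have := Measure.isProbabilityMeasure_map (μ := m) hq.aemeasurable
    rw [← integral_map (f := a) hq.aemeasurable (measurable_of_finite a).aestronglyMeasurable,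
      integral_fintype .of_finite]
    simp_rw [map_measureReal_apply hq (measurableSet_singleton _), smul_eq_mul]
  obtain ⟨p, hp, hp1, hp2, hpc⟩ := exists_plan_of_forall_potential c (hsimplex μ) (hsimplex ν) v
    fun a b hab => by
      rw [← hintegral, ← hintegral]
      refine hdual (fun x => a (q x)) (fun x => b (q x)) (∑ i, (|a i| + |b i|))
        ((measurable_of_finite a).comp hq) ((measurable_of_finite b).comp hq) (fun x => ?_)
        (fun x => ?_) fun x y => (hab _ _).trans (hcle x y)
      · exact (le_add_of_nonneg_right (abs_nonneg _)).trans
          (Finset.single_le_sum (f := fun i => |a i| + |b i|) (fun i _ => by positivity)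
            (Finset.mem_univ (q x)))
      · exact (le_add_of_nonneg_left (abs_nonneg _)).trans
          (Finset.single_le_sum (f := fun i => |a i| + |b i|) (fun i _ => by positivity)
            (Finset.mem_univ (q x)))
  obtain ⟨π, hπ, hπcell⟩ := exists_isCoupling_of_plan hq hp hp1 hp2
  refine ⟨π, hπ, ?_⟩
  obtain ⟨hπprob, hfst, hsnd⟩ := hπ
  have hqq : Measurable fun z : EuclideanSpace ℝ (Fin d) × EuclideanSpace ℝ (Fin d) =>
      (q z.1, q z.2) := by fun_prop
  have hcost : ∫⁻ z, ENNReal.ofReal (c (q z.1) (q z.2)) ∂π ≤ ENNReal.ofReal v := by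
    rw [← lintegral_map (f := fun k : ι × ι => ENNReal.ofReal (c k.1 k.2))
      (measurable_of_finite _) hqq, lintegral_fintype, Fintype.sum_prod_type]
    refine le_of_eq_of_le ?_ (ENNReal.ofReal_le_ofReal hpc)
    rw [ENNReal.ofReal_sum_of_nonneg fun i _ =>
      Finset.sum_nonneg fun j _ => mul_nonneg (hp i j) (hc0 i j)]
    refine Finset.sum_congr rfl fun i _ => ?_
    rw [ENNReal.ofReal_sum_of_nonneg fun j _ => mul_nonneg (hp i j) (hc0 i j)]
    refine Finset.sum_congr rfl fun j _ => ?_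
    rw [Measure.map_apply hqq (measurableSet_singleton _), ENNReal.ofReal_mul (hp i j),
      ← hπcell, mul_comm]
    congr 2
    ext z
    simp [Prod.ext_iff]
  have hpt : ∀ z : EuclideanSpace ℝ (Fin d) × EuclideanSpace ℝ (Fin d),
      ENNReal.ofReal (‖z.1 - z.2‖ ^ 2) ≤ ENNReal.ofReal (c (q z.1) (q z.2)) + ENNReal.ofReal ε
        + sqNormTail R z.1 + sqNormTail R z.2 := by
    rintro ⟨x, y⟩
    by_cases h : R < ‖x‖ ∨ R < ‖y‖
    · refine (ofReal_sq_norm_sub_le_sqNormTail h).trans ?_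
      rw [add_assoc _ (sqNormTail R x)]
      exact le_add_self
    · push Not at h
      refine le_trans ?_ (le_self_add.trans le_self_add)
      rw [← ENNReal.ofReal_add (hc0 _ _) hε.le]
      exact ENNReal.ofReal_le_ofReal (hlec x y h.1 h.2)
  have hT := measurable_sqNormTail (E := EuclideanSpace ℝ (Fin d)) R
  have hT1 : Measurable fun z : EuclideanSpace ℝ (Fin d) × EuclideanSpace ℝ (Fin d) =>
      sqNormTail R z.1 := hT.comp measurable_fst
  have hT2 : Measurable fun z : EuclideanSpace ℝ (Fin d) × EuclideanSpace ℝ (Fin d) =>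
      sqNormTail R z.2 := hT.comp measurable_snd
  calc transportCost π
      ≤ ∫⁻ z, (ENNReal.ofReal (c (q z.1) (q z.2)) + ENNReal.ofReal ε
        + sqNormTail R z.1 + sqNormTail R z.2) ∂π := lintegral_mono hpt
    _ = ∫⁻ z, ENNReal.ofReal (c (q z.1) (q z.2)) ∂π + ENNReal.ofReal ε
        + ∫⁻ z, sqNormTail R z.1 ∂π + ∫⁻ z, sqNormTail R z.2 ∂π := by
      rw [lintegral_add_right _ hT2, lintegral_add_right _ hT1,
        lintegral_add_right _ measurable_const]
      simp
    _ = ∫⁻ z, ENNReal.ofReal (c (q z.1) (q z.2)) ∂π + ENNReal.ofReal ε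
        + ∫⁻ x, sqNormTail R x ∂μ + ∫⁻ x, sqNormTail R x ∂ν := by
      rw [← lintegral_map hT measurable_fst, ← lintegral_map hT measurable_snd, hfst, hsnd]
    _ ≤ _ := by gcongr

/-- **Talagrand's transportation-cost inequality for log-concave reference measures**:
if `π₀` has density `e^{−V}` with `V` being `ρ`-strongly convex (`ρ > 0`), then for
every probability measure `ν` with `D_KL(ν‖π₀) < ∞`, the infimum over all couplings
of `π₀` and `ν` of the quadratic transport cost is at most `(2/ρ)·D_KL(ν‖π₀)`. -/
theorem talagrand_inequality_log_concave {d : ℕ} (ρ : ℝ) (hρ : 0 < ρ)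
    (V : EuclideanSpace ℝ (Fin d) → ℝ)
    (hV : ConvexOn ℝ Set.univ fun x => V x - ρ / 2 * ‖x‖ ^ 2)
    (π₀ : Measure (EuclideanSpace ℝ (Fin d)))
    (hπ₀ : π₀ = volume.withDensity fun x => ENNReal.ofReal (Real.exp (-V x)))
    [IsProbabilityMeasure π₀]
    (ν : Measure (EuclideanSpace ℝ (Fin d))) [IsProbabilityMeasure ν]
    (hKL : klDiv ν π₀ < ∞) :
    sInf {c : ℝ≥0∞ | ∃ π, IsCoupling π π₀ ν ∧ c = transportCost π}
      ≤ ENNReal.ofReal (2 / ρ) * klDiv ν π₀ := by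
  have hac : ν ≪ π₀ ∧ Integrable (llr ν π₀) ν := by
    by_contra h
    simp [klDiv, h] at hKL
  obtain ⟨hνπ, hllr⟩ := hac
  have hkl : ENNReal.ofReal (2 / ρ) * klDiv ν π₀
      = ENNReal.ofReal (2 / ρ * ∫ x, llr ν π₀ x ∂ν) := by
    rw [klDiv, if_pos ⟨hνπ, hllr⟩, ENNReal.ofReal_mul (by positivity)]
  have hexp := integrable_exp_sq_norm hV hπ₀ hρ
  have hsq : ∀ {m : Measure (EuclideanSpace ℝ (Fin d))},
      Integrable (fun x => ρ / 8 * ‖x‖ ^ 2) m → Integrable (fun x => ‖x‖ ^ 2) m := fun h => by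
    refine (h.const_mul (8 / ρ)).congr (ae_of_all _ fun x => ?_)
    field_simp
  have hπsq : Integrable (fun x => ‖x‖ ^ 2) π₀ :=
    hsq (hexp.mono' (by fun_prop) (ae_of_all _ fun x => by
      rw [Real.norm_of_nonneg (by positivity)]
      linarith [Real.add_one_le_exp (ρ / 8 * ‖x‖ ^ 2)]))
  have hνsq : Integrable (fun x => ‖x‖ ^ 2) ν :=
    hsq (integrable_of_integrable_exp hνπ hllr (by fun_prop) (fun x => by positivity) hexp)
  have hbound : ∀ n : ℕ, sInf {c : ℝ≥0∞ | ∃ π, IsCoupling π π₀ ν ∧ c = transportCost π}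
      ≤ ENNReal.ofReal (2 / ρ * ∫ x, llr ν π₀ x ∂ν) + ENNReal.ofReal (1 / ((n : ℝ) + 1))
        + ∫⁻ x, sqNormTail n x ∂π₀ + ∫⁻ x, sqNormTail n x ∂ν := by
    intro n
    obtain ⟨π, hπ, hcost⟩ := exists_isCoupling_transportCost_le
      (fun u w C hu hw huC hwC huw =>
        integral_add_integral_le_of_add_le hV hπ₀ hρ hνπ hllr hu hw huC hwC huw)
      (Nat.cast_nonneg n) (Nat.one_div_pos_of_nat (α := ℝ) (n := n))
    have hmem : transportCost π ∈ {c : ℝ≥0∞ | ∃ π, IsCoupling π π₀ ν ∧ c = transportCost π} :=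
      ⟨π, hπ, rfl⟩
    exact (sInf_le hmem).trans hcost
  rw [hkl]
  have hlim := ((tendsto_const_nhds (x := ENNReal.ofReal (2 / ρ * ∫ x, llr ν π₀ x ∂ν))).add
    (ENNReal.tendsto_ofReal tendsto_one_div_add_atTop_nhds_zero_nat)).add
    (tendsto_lintegral_sqNormTail hπsq) |>.add (tendsto_lintegral_sqNormTail hνsq)
  simp only [ENNReal.ofReal_zero, add_zero] at hlim
  exact ge_of_tendsto' hlim hbound
end
end
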